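/- For every α with 0 < α < 1 there exists a function f ∈ C^{1+α}[0,1] (i.e., f is differentiable and f' is Hölder continuous with exponent α) such that for every set A ⊆ [0,1] with upper box dimension greater than α, the restriction of f to A is neither convex nor concave. -/

import Mathlib

open Set MeasureTheory Filter

/-- Number of `N`-adic grid intervals `[(j-1)/N^k, j/N^k]` meeting `A`. -/
noncomputable def gridCount (N k : ℕ) (A : Set ℝ) : ℕ :=
  {j : ℕ | 1 ≤ j ∧ j ≤ N ^ k ∧
    (A ∩ Set.Icc (((j : ℝ) - 1) / (N : ℝ) ^ k) ((j : ℝ) / (N : ℝ) ^ k)).Nonempty}.ncard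

/-- Upper box (Minkowski) dimension, via dyadic grid counts. -/
noncomputable def ubDim (A : Set ℝ) : ℝ :=
  Filter.limsup (fun k : ℕ => Real.log (gridCount 2 k A) / (k * Real.log 2)) Filter.atTop

/-- `f` restricted to `A` is convex: it agrees on `A` with a function convex on the convex hull. -/
def ConvexRestr (f : ℝ → ℝ) (A : Set ℝ) : Prop :=
  ∃ h : ℝ → ℝ, ConvexOn ℝ (convexHull ℝ A) h ∧ Set.EqOn f h A

/-- `f` restricted to `A` is concave. -/
def ConcaveRestr (f : ℝ → ℝ) (A : Set ℝ) : Prop :=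
  ∃ h : ℝ → ℝ, ConcaveOn ℝ (convexHull ℝ A) h ∧ Set.EqOn f h A

/-!
The function is a series of perturbations. The one of level `l` puts a bump of height at most
`(t / M) ^ l`, where `t = M ^ (-α)`, on each `M`-adic cell of level `l`. Its slopes are of order
`t ^ l = (M ^ (-l)) ^ α`, so the derivative of the sum is `α`-Hölder whatever the heights are.

Heights are drawn from `4 * M` equally spaced values. Fix a line. On a given child of a cell, at
most one of these values keeps the function near the line, in value and slope, at the next scale,
so the `M` children contribute at most `1 / 4` near cells on average and an exponential moment of
the number of near cells does not increase. Summing these moments over nets of lines of all scales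
yields one choice of the heights for which every line of bounded slope has `O(n)` such cells at
level `n`. A cell where the function is near the line in value only leaves the line transversally
at some earlier scale, which leads to `O(n ^ 2)` cells in all.

Now let `f` be convex on `A`, and let `N n` be the number of cells of level `n` that meet `A`. The
slopes of the chords between points of `A` increase from cell to cell and are bounded, so at most
`O(M ^ k * t ^ (-(l + k)))` cells of level `l` carry chords whose slopes differ by
`2 * t ^ (l + k) / M ^ k`. Over any other cell `f` is near a single line, at the scale of level
`l + k`, on the points of `A`. Therefore
`N (l + k) ≤ K * M ^ (2 * k) * (M ^ α) ^ (l + k) + C * (l + k + 1) ^ 2 * N l`, and letting `k` be a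
small proportion of `l + k` gives `N n = O((M ^ β) ^ n)` for all `β > α`.
-/

namespace ConvexRestriction

open scoped Finset

/-- A smooth bump equal to `1` on the unit interval and supported in `[-1/2, 3/2]`; its rescaled
translates, one for each grid cell, are what the function is built from. -/
noncomputable def cellBump : ContDiffBump (1 / 2 : ℝ) := ⟨1 / 2, 1, by norm_num, by norm_num⟩

theorem cellBump_eq_one {x : ℝ} (hx : x ∈ Icc (0 : ℝ) 1) : cellBump x = 1 := by
  refine cellBump.one_of_mem_closedBall ?_
  rw [Real.closedBall_eq_Icc]
  exact ⟨by norm_num [cellBump]; exact hx.1, by norm_num [cellBump]; exact hx.2⟩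

theorem deriv_cellBump_eq_zero {x : ℝ} (hx : x ∈ Icc (0 : ℝ) 1) : deriv cellBump x = 0 := by
  refine IsLocalMax.deriv_eq_zero (Eventually.of_forall fun y ↦ ?_)
  rw [cellBump_eq_one hx]
  exact cellBump.le_one

theorem support_cellBump_subset : Function.support cellBump ⊆ Icc (-1 / 2) (3 / 2) := by
  refine subset_tsupport _ |>.trans ?_
  rw [cellBump.tsupport_eq, Real.closedBall_eq_Icc]
  exact Icc_subset_Icc (by norm_num [cellBump]) (by norm_num [cellBump])

theorem support_deriv_subset_Icc {g : ℝ → ℝ} {a b : ℝ} (hg : Function.support g ⊆ Icc a b) :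
    Function.support (deriv g) ⊆ Icc a b :=
  support_deriv_subset.trans (closure_minimal hg isClosed_Icc)

theorem exists_cellBump_bound : ∃ B : ℝ, ∀ x,
    3 * |cellBump x| ≤ B ∧ 3 * |deriv cellBump x| ≤ B ∧ 3 * |deriv (deriv cellBump) x| ≤ B := by
  have h₂ : ContDiff ℝ 2 cellBump := cellBump.contDiff
  have h₁ : ContDiff ℝ 1 (deriv cellBump) := h₂.deriv'
  have h₀ : ContDiff ℝ 0 (deriv (deriv cellBump)) := h₁.deriv'
  have hc := cellBump.hasCompactSupport
  obtain ⟨B₀, hB₀⟩ := h₂.continuous.bounded_above_of_compact_support hc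
  obtain ⟨B₁, hB₁⟩ := h₁.continuous.bounded_above_of_compact_support hc.deriv
  obtain ⟨B₂, hB₂⟩ := h₀.continuous.bounded_above_of_compact_support hc.deriv.deriv
  refine ⟨3 * max B₀ (max B₁ B₂), fun x ↦ ⟨?_, ?_, ?_⟩⟩ <;> gcongr
  · exact (hB₀ x).trans (le_max_left _ _)
  · exact (hB₁ x).trans ((le_max_left _ _).trans (le_max_right _ _))
  · exact (hB₂ x).trans ((le_max_right _ _).trans (le_max_right _ _))

/-- A bound for sums of translates of the bump by distinct integers, and of its first two
derivatives: the factor `3` in its specification is the number of translates that overlap. -/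
noncomputable def bumpBound : ℝ := exists_cellBump_bound.choose

theorem abs_cellBump_le (x : ℝ) : 3 * |cellBump x| ≤ bumpBound :=
  (exists_cellBump_bound.choose_spec x).1

theorem abs_deriv_cellBump_le (x : ℝ) : 3 * |deriv cellBump x| ≤ bumpBound :=
  (exists_cellBump_bound.choose_spec x).2.1

theorem abs_deriv_deriv_cellBump_le (x : ℝ) : 3 * |deriv (deriv cellBump) x| ≤ bumpBound :=
  (exists_cellBump_bound.choose_spec x).2.2

theorem three_le_bumpBound : 3 ≤ bumpBound := by
  simpa [cellBump_eq_one] using abs_cellBump_le 0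

theorem card_filter_sub_mem_Icc_le (s : Finset ℕ) (y : ℝ) :
    #(s.filter fun i : ℕ ↦ y - i ∈ Icc (-1 / 2 : ℝ) (3 / 2)) ≤ 3 := by
  have hmaps : MapsTo (fun i : ℕ ↦ (i : ℤ)) (s.filter fun i : ℕ ↦ y - i ∈ Icc (-1 / 2 : ℝ) (3 / 2))
      (Finset.Icc ⌈y - 3 / 2⌉ ⌊y + 1 / 2⌋) := by
    intro i hi
    obtain ⟨-, hlo, hhi⟩ := Finset.mem_filter.1 hi
    refine Finset.mem_coe.2 (Finset.mem_Icc.2 ⟨Int.ceil_le.2 ?_, Int.le_floor.2 ?_⟩) <;>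
      push_cast <;> linarith
  have hlen : ⌊y + 1 / 2⌋ < ⌈y - 3 / 2⌉ + 3 := by
    rw [Int.floor_lt]
    push_cast
    linarith [Int.le_ceil (y - 3 / 2)]
  calc _ ≤ #(Finset.Icc ⌈y - 3 / 2⌉ ⌊y + 1 / 2⌋) :=
        Finset.card_le_card_of_injOn _ hmaps Nat.cast_injective.injOn
    _ ≤ 3 := by rw [Int.card_Icc]; omega

/-- The superposition `∑ i, a i * g (x * M ^ l - i)` of copies of `g` placed on the cells
`[i / M ^ l, (i + 1) / M ^ l]` that meet the unit interval. -/
noncomputable def cellSum (g : ℝ → ℝ) (M l : ℕ) (a : ℕ → ℝ) (x : ℝ) : ℝ :=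
  ∑ i ∈ Finset.range (M ^ l + 1), a i * g (x * M ^ l - i)

theorem abs_cellSum_le {g : ℝ → ℝ} {C : ℝ} (hsupp : Function.support g ⊆ Icc (-1 / 2) (3 / 2))
    (hg : ∀ x, 3 * |g x| ≤ C) (M l : ℕ) {a : ℕ → ℝ} (ha : ∀ i, |a i| ≤ 1) (x : ℝ) :
    |cellSum g M l a x| ≤ C := by
  set near := (Finset.range (M ^ l + 1)).filter fun i : ℕ ↦ x * M ^ l - i ∈ Icc (-1 / 2 : ℝ) (3 / 2)
  have hsum : cellSum g M l a x = ∑ i ∈ near, a i * g (x * M ^ l - i) := by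
    refine (Finset.sum_filter_of_ne fun i _ hi ↦ hsupp ?_).symm
    exact right_ne_zero_of_mul hi
  have hterm (i : ℕ) : |a i * g (x * M ^ l - i)| ≤ C / 3 := by
    rw [abs_mul]
    nlinarith [ha i, hg (x * M ^ l - i), abs_nonneg (g (x * M ^ l - i))]
  have hcard : (#near : ℝ) ≤ 3 := Nat.cast_le_ofNat.2 (card_filter_sub_mem_Icc_le _ _)
  have hC : 0 ≤ C := le_trans (by positivity) (hg 0)
  calc |cellSum g M l a x| ≤ ∑ i ∈ near, |a i * g (x * M ^ l - i)| :=
        hsum ▸ Finset.abs_sum_le_sum_abs _ _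
    _ ≤ #near * (C / 3) := by
        rw [← nsmul_eq_mul]
        exact Finset.sum_le_card_nsmul _ _ _ fun i _ ↦ hterm i
    _ ≤ 3 * (C / 3) := by gcongr
    _ = C := by ring

theorem hasDerivAt_cellSum {g : ℝ → ℝ} (hg : Differentiable ℝ g) (M l : ℕ) (a : ℕ → ℝ) (x : ℝ) :
    HasDerivAt (cellSum g M l a) (M ^ l * cellSum (deriv g) M l a x) x := by
  have hscale (i : ℕ) : HasDerivAt (fun x : ℝ ↦ x * M ^ l - i) ((M : ℝ) ^ l) x := by
    simpa using ((hasDerivAt_id x).mul_const ((M : ℝ) ^ l)).sub_const (i : ℝ)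
  refine (HasDerivAt.fun_sum fun i _ ↦
    (((hg _).hasDerivAt.comp x (hscale i)).const_mul (a i))).congr_deriv ?_
  rw [cellSum, Finset.mul_sum]
  exact Finset.sum_congr rfl fun i _ ↦ by ring

/-- The index of the `M`-adic cell of level `l` containing `x`. -/
noncomputable def cellIndex (M l : ℕ) (x : ℝ) : ℕ := ⌊x * (M : ℝ) ^ l⌋₊

/-- The coefficients `a` on the indices of parity `e` and `b` on the others. Cells of equal parity
are so far apart that the bumps of one vanish on the other. -/
def parityMix (e : ℕ) (a b : ℕ → ℝ) (i : ℕ) : ℝ := if i % 2 = e then a i else b i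

theorem parityMix_zero_eq_one (a b : ℕ → ℝ) : parityMix 0 a b = parityMix 1 b a := by
  funext i
  rcases Nat.mod_two_eq_zero_or_one i with h | h <;> simp [parityMix, h]

theorem abs_parityMix_le {a b : ℕ → ℝ} (ha : ∀ i, |a i| ≤ 1) (hb : ∀ i, |b i| ≤ 1) (e i : ℕ) :
    |parityMix e a b i| ≤ 1 := by
  unfold parityMix
  split_ifs
  exacts [ha i, hb i]

section CellIndex

variable {M l : ℕ} {x y : ℝ}

theorem cellIndex_le (hx : 0 ≤ x) : (cellIndex M l x : ℝ) ≤ x * M ^ l :=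
  Nat.floor_le (by positivity)

theorem lt_cellIndex_add_one : x * M ^ l < cellIndex M l x + 1 :=
  Nat.lt_floor_add_one _

theorem cellIndex_mem_range (hx : x ≤ 1) : cellIndex M l x ∈ Finset.range (M ^ l + 1) := by
  refine Finset.mem_range.2 (Nat.lt_succ_of_le (Nat.floor_le_of_le ?_))
  push_cast
  exact mul_le_of_le_one_left (by positivity) hx

theorem cellIndex_eq_div (hM : 0 < M) (k : ℕ) :
    cellIndex M l x = cellIndex M (l + k) x / M ^ k := by
  have : (M : ℝ) ≠ 0 := by positivity
  rw [cellIndex, cellIndex, ← Nat.floor_div_natCast]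
  congr 1
  push_cast
  field_simp
  ring

theorem cellIndex_succ_div (hM : 0 < M) : cellIndex M (l + 1) x / M = cellIndex M l x := by
  simpa using (cellIndex_eq_div (l := l) (x := x) hM 1).symm

theorem abs_sub_mul_pow_le_one (hx : 0 ≤ x) (hy : 0 ≤ y) (h : cellIndex M l x = cellIndex M l y) :
    |x - y| * M ^ l ≤ 1 := by
  have hxi := cellIndex_le (M := M) (l := l) hx
  have hyi := cellIndex_le (M := M) (l := l) hy
  have hxi' := lt_cellIndex_add_one (M := M) (l := l) (x := x)
  have hyi' := lt_cellIndex_add_one (M := M) (l := l) (x := y)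
  rw [h] at hxi hxi'
  rw [← abs_of_nonneg (by positivity : (0 : ℝ) ≤ (M : ℝ) ^ l), ← abs_mul, sub_mul, abs_le]
  constructor <;> linarith

theorem cellIndex_le_add_one (hx : 0 ≤ x) (h : |x - y| * M ^ l ≤ 1) :
    cellIndex M l y ≤ cellIndex M l x + 1 := by
  have hyx : y * M ^ l ≤ x * M ^ l + 1 := by
    nlinarith [neg_abs_le (x - y), pow_nonneg (Nat.cast_nonneg (α := ℝ) M) l]
  calc cellIndex M l y ≤ ⌊x * (M : ℝ) ^ l + 1⌋₊ := Nat.floor_mono hyx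
    _ = cellIndex M l x + 1 := Nat.floor_add_one (by positivity)

theorem lt_of_cellIndex_lt (h : cellIndex M l x < cellIndex M l y) : x < y := by
  by_contra! hyx
  exact h.not_ge (Nat.floor_mono (by gcongr))

end CellIndex

theorem cellSum_parityMix {g : ℝ → ℝ} {c : ℝ} (hsupp : Function.support g ⊆ Icc (-1 / 2) (3 / 2))
    (hg : ∀ x ∈ Icc (0 : ℝ) 1, g x = c) {M l e : ℕ} (a b : ℕ → ℝ) {x : ℝ}
    (hx : x ∈ Icc (0 : ℝ) 1) (he : cellIndex M l x % 2 = e) :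
    cellSum g M l (parityMix e a b) x =
      a (cellIndex M l x) * c + cellSum g M l (parityMix e 0 b) x := by
  have hlo := cellIndex_le (M := M) (l := l) hx.1
  have hhi := lt_cellIndex_add_one (M := M) (l := l) (x := x)
  rw [← sub_eq_iff_eq_add, cellSum, cellSum, ← Finset.sum_sub_distrib,
    Finset.sum_eq_single_of_mem _ (cellIndex_mem_range hx.2)]
  · rw [parityMix, parityMix, if_pos he, if_pos he, hg _ ⟨by linarith, by linarith⟩]
    simp
  · intro i _ hne
    simp only [parityMix]
    split_ifs with hi
    · have hfar : g (x * M ^ l - i) = 0 := by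
        by_contra hgi
        obtain ⟨h₁, h₂⟩ := hsupp hgi
        have h₁' : i < cellIndex M l x + 2 := by rify; linarith
        have h₂' : cellIndex M l x < i + 2 := by rify; linarith
        omega
      simp [hfar]
    · exact sub_self _

/-- `F` is differentiable and its derivative is Lipschitz with constant `K`. -/
structure LipDeriv (K : ℝ) (F : ℝ → ℝ) : Prop where
  differentiable : Differentiable ℝ F
  abs_deriv_sub_le : ∀ x y, |deriv F x - deriv F y| ≤ K * |x - y|

/-- The affine function with slope `p.1` and value `p.2` at `0`. -/
def line (p : ℝ × ℝ) (x : ℝ) : ℝ := p.1 * x + p.2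

theorem hasDerivAt_line (p : ℝ × ℝ) (x : ℝ) : HasDerivAt (line p) p.1 x :=
  (((hasDerivAt_id x).const_mul p.1).add_const p.2).congr_deriv (mul_one _)

theorem deriv_sub_line {F : ℝ → ℝ} (hF : Differentiable ℝ F) (p : ℝ × ℝ) (x : ℝ) :
    deriv (F - line p) x = deriv F x - p.1 :=
  ((hF x).hasDerivAt.sub (hasDerivAt_line p x)).deriv

namespace LipDeriv

variable {K K' : ℝ} {F G : ℝ → ℝ}

theorem const_zero : LipDeriv 0 0 :=
  ⟨differentiable_const 0, by simp⟩

theorem nonneg (hF : LipDeriv K F) : 0 ≤ K := by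
  simpa using (abs_nonneg _).trans (hF.abs_deriv_sub_le 1 0)

theorem mono (hF : LipDeriv K F) (h : K ≤ K') : LipDeriv K' F :=
  ⟨hF.differentiable, fun x y ↦ (hF.abs_deriv_sub_le x y).trans (by gcongr)⟩

theorem add (hF : LipDeriv K F) (hG : LipDeriv K' G) : LipDeriv (K + K') (F + G) where
  differentiable := hF.differentiable.add hG.differentiable
  abs_deriv_sub_le x y := by
    rw [deriv_add (hF.differentiable x) (hG.differentiable x),
      deriv_add (hF.differentiable y) (hG.differentiable y), add_sub_add_comm, add_mul]
    exact (abs_add_le _ _).trans (add_le_add (hF.abs_deriv_sub_le x y) (hG.abs_deriv_sub_le x y))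

theorem sub_line (hF : LipDeriv K F) (p : ℝ × ℝ) : LipDeriv K (F - line p) where
  differentiable := hF.differentiable.sub fun x ↦ (hasDerivAt_line p x).differentiableAt
  abs_deriv_sub_le x y := by
    simpa [deriv_sub_line hF.differentiable] using hF.abs_deriv_sub_le x y

theorem abs_sub_le (hF : LipDeriv K F) (x y : ℝ) :
    |F y - F x| ≤ (|deriv F x| + K * |y - x|) * |y - x| := by
  refine (convex_segment x y).norm_image_sub_le_of_norm_deriv_le
    (fun z _ ↦ hF.differentiable z) (fun z hz ↦ ?_)
    (left_mem_segment ℝ x y) (right_mem_segment ℝ x y)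
  have hzx : |z - x| ≤ |y - x| := abs_sub_left_of_mem_uIcc (segment_eq_uIcc x y ▸ hz)
  calc |deriv F z| = |deriv F x + (deriv F z - deriv F x)| := by ring_nf
    _ ≤ |deriv F x| + K * |z - x| :=
        (abs_add_le _ _).trans (add_le_add le_rfl (hF.abs_deriv_sub_le z x))
    _ ≤ |deriv F x| + K * |y - x| := by
        have := hF.nonneg
        gcongr

end LipDeriv

/-- The perturbation of level `l`: bumps of height at most `(t / M) ^ l`, hence of slope comparable
to `t ^ l`, on the cells of length `M⁻¹ ^ l`. -/
noncomputable def perturb (M : ℕ) (t : ℝ) (l : ℕ) (a : ℕ → ℝ) (x : ℝ) : ℝ :=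
  (t / M) ^ l * cellSum cellBump M l a x

section Perturb

variable {M : ℕ} {t : ℝ}

theorem hasDerivAt_perturb (hM : 0 < M) (t : ℝ) (l : ℕ) (a : ℕ → ℝ) (x : ℝ) :
    HasDerivAt (perturb M t l a) (t ^ l * cellSum (deriv cellBump) M l a x) x := by
  have : (M : ℝ) ≠ 0 := by positivity
  have hdiff : Differentiable ℝ cellBump := cellBump.contDiff.differentiable one_ne_zero
  refine ((hasDerivAt_cellSum hdiff M l a x).const_mul ((t / M) ^ l)).congr_deriv ?_
  rw [div_pow]
  field_simp

theorem abs_perturb_le (ht : 0 ≤ t) (l : ℕ) {a : ℕ → ℝ} (ha : ∀ i, |a i| ≤ 1) (x : ℝ) :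
    |perturb M t l a x| ≤ bumpBound * (t / M) ^ l := by
  rw [perturb, abs_mul, abs_of_nonneg (by positivity), mul_comm]
  gcongr
  exact abs_cellSum_le support_cellBump_subset abs_cellBump_le M l ha x

theorem abs_deriv_perturb_le (hM : 0 < M) (ht : 0 ≤ t) (l : ℕ) {a : ℕ → ℝ} (ha : ∀ i, |a i| ≤ 1)
    (x : ℝ) : |deriv (perturb M t l a) x| ≤ bumpBound * t ^ l := by
  rw [(hasDerivAt_perturb hM t l a x).deriv, abs_mul, abs_of_nonneg (by positivity), mul_comm]
  gcongr
  exact abs_cellSum_le (support_deriv_subset_Icc support_cellBump_subset) abs_deriv_cellBump_le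
    M l ha x

theorem lipDeriv_perturb (hM : 0 < M) (ht : 0 ≤ t) (l : ℕ) {a : ℕ → ℝ} (ha : ∀ i, |a i| ≤ 1) :
    LipDeriv (bumpBound * (t * M) ^ l) (perturb M t l a) where
  differentiable x := (hasDerivAt_perturb hM t l a x).differentiableAt
  abs_deriv_sub_le x y := by
    have hdiff : Differentiable ℝ (deriv cellBump) :=
      (cellBump.contDiff (n := 2)).deriv'.differentiable one_ne_zero
    have hlip : |cellSum (deriv cellBump) M l a x - cellSum (deriv cellBump) M l a y| ≤
        bumpBound * M ^ l * |x - y| := by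
      refine convex_univ.norm_image_sub_le_of_norm_hasDerivWithin_le
        (fun z _ ↦ (hasDerivAt_cellSum hdiff M l a z).hasDerivWithinAt) (fun z _ ↦ ?_)
        (mem_univ y) (mem_univ x)
      rw [norm_mul, Real.norm_of_nonneg (by positivity), mul_comm]
      gcongr
      exact abs_cellSum_le (support_deriv_subset_Icc (support_deriv_subset_Icc
        support_cellBump_subset)) abs_deriv_deriv_cellBump_le M l ha z
    rw [(hasDerivAt_perturb hM t l a x).deriv, (hasDerivAt_perturb hM t l a y).deriv, ← mul_sub,
      abs_mul, abs_of_nonneg (by positivity)]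
    calc _ ≤ t ^ l * (bumpBound * M ^ l * |x - y|) := by gcongr
      _ = bumpBound * (t * M) ^ l * |x - y| := by ring

variable {l e : ℕ} (a b : ℕ → ℝ) {x : ℝ}

theorem perturb_parityMix (hx : x ∈ Icc (0 : ℝ) 1) (he : cellIndex M l x % 2 = e) :
    perturb M t l (parityMix e a b) x =
      perturb M t l (parityMix e 0 b) x + (t / M) ^ l * a (cellIndex M l x) := by
  rw [perturb, cellSum_parityMix support_cellBump_subset (fun _ ↦ cellBump_eq_one) a b hx he,
    mul_one, mul_add, add_comm, perturb]

theorem deriv_perturb_parityMix (hM : 0 < M) (hx : x ∈ Icc (0 : ℝ) 1)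
    (he : cellIndex M l x % 2 = e) :
    deriv (perturb M t l (parityMix e a b)) x = deriv (perturb M t l (parityMix e 0 b)) x := by
  rw [(hasDerivAt_perturb hM t l _ x).deriv, (hasDerivAt_perturb hM t l _ x).deriv,
    cellSum_parityMix (support_deriv_subset_Icc support_cellBump_subset)
      (fun _ ↦ deriv_cellBump_eq_zero) a b hx he, mul_zero, zero_add]

end Perturb

theorem finite_cellIndex_image (M n : ℕ) (A : Set ℝ) :
    (cellIndex M n '' (A ∩ Icc 0 1)).Finite :=
  (Finset.range (M ^ n + 1)).finite_toSet.subset <| image_subset_iff.2 fun _ hx ↦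
    cellIndex_mem_range hx.2.2

/-- The indices of the `M`-adic cells of level `n` that contain a point of `A ∩ [0, 1]`. -/
noncomputable def cells (M n : ℕ) (A : Set ℝ) : Finset ℕ :=
  (finite_cellIndex_image M n A).toFinset

section Cells

variable {M n j : ℕ} {A A' : Set ℝ}

theorem mem_cells : j ∈ cells M n A ↔ ∃ x ∈ A ∩ Icc 0 1, cellIndex M n x = j :=
  (finite_cellIndex_image M n A).mem_toFinset

theorem cells_subset_range (M n : ℕ) (A : Set ℝ) : cells M n A ⊆ Finset.range (M ^ n + 1) := by
  intro j hj
  obtain ⟨x, hx, rfl⟩ := mem_cells.1 hj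
  exact cellIndex_mem_range hx.2.2

theorem cellIndex_mem_cells {x : ℝ} (hx : x ∈ A) (hx' : x ∈ Icc (0 : ℝ) 1) :
    cellIndex M n x ∈ cells M n A :=
  mem_cells.2 ⟨x, ⟨hx, hx'⟩, rfl⟩

theorem cells_mono (h : A ∩ Icc 0 1 ⊆ A') : cells M n A ⊆ cells M n A' := fun _ hj ↦ by
  obtain ⟨x, hx, rfl⟩ := mem_cells.1 hj
  exact cellIndex_mem_cells (h hx) hx.2

theorem card_cells_le (M n : ℕ) (A : Set ℝ) : #(cells M n A) ≤ M ^ n + 1 :=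
  (Finset.card_le_card (cells_subset_range M n A)).trans_eq (Finset.card_range _)

theorem card_filter_div_eq_le (hM : 0 < M) (s : Finset ℕ) (i : ℕ) : #{j ∈ s | j / M = i} ≤ M := by
  calc #{j ∈ s | j / M = i} ≤ #(Finset.Ico (i * M) (i * M + M)) := by
        refine Finset.card_le_card fun j hj ↦ Finset.mem_Ico.2 ?_
        rw [← (Finset.mem_filter.1 hj).2]
        exact ⟨Nat.div_mul_le_self j M, Nat.lt_div_mul_add hM⟩
    _ = M := by simp

theorem card_cells_add_le (hM : 0 < M) (n k : ℕ) (A : Set ℝ) :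
    #(cells M (n + k) A) ≤ M ^ k * #(cells M n A) := by
  refine Finset.card_le_mul_card_image_of_maps_to (f := fun j ↦ j / M ^ k) (fun j hj ↦ ?_) _
    fun i _ ↦ card_filter_div_eq_le (by positivity) _ i
  obtain ⟨x, hx, rfl⟩ := mem_cells.1 hj
  exact cellIndex_eq_div hM k ▸ cellIndex_mem_cells hx.1 hx.2

end Cells

/-- The conditions on the base `M` of the cells and the factor `t` by which the slopes of the
perturbations shrink from one level to the next. -/
structure Scales (M : ℕ) (t : ℝ) : Prop where
  pos : 0 < t
  two_le_mul : 2 ≤ t * M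
  small : 4 * (8 * bumpBound + 12) * t < 1

namespace Scales

variable {M : ℕ} {t : ℝ}

theorem le_half (h : Scales M t) : t ≤ 1 / 2 := by
  nlinarith [h.small, h.pos, three_le_bumpBound]

theorem two_le (h : Scales M t) : 2 ≤ M := by
  have : (2 : ℝ) ≤ M := h.two_le_mul.trans (by nlinarith [h.le_half, Nat.cast_nonneg (α := ℝ) M])
  exact_mod_cast this

theorem base_pos (h : Scales M t) : 0 < M :=
  two_pos.trans_le h.two_le

theorem ratio_pos (h : Scales M t) : 0 < t / M :=
  div_pos h.pos (Nat.cast_pos.2 h.base_pos)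

theorem ratio_le_half (h : Scales M t) : t / M ≤ 1 / 2 :=
  (div_le_self h.pos.le (Nat.one_le_cast.2 h.base_pos)).trans h.le_half

end Scales

/-- The points where `G` and its derivative are small on the scale of the perturbation of level
`l`. -/
def nearSet (M : ℕ) (t : ℝ) (l : ℕ) (G : ℝ → ℝ) : Set ℝ :=
  {x | |G x| ≤ (2 * bumpBound + 3) * (t / M) ^ l ∧ |deriv G x| ≤ (3 * bumpBound + 6) * t ^ l}

/-- The cells of level `l` that meet `nearSet M t l G`. -/
noncomputable def nearCells (M : ℕ) (t : ℝ) (l : ℕ) (G : ℝ → ℝ) : Finset ℕ :=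
  cells M l (nearSet M t l G)

section NearCells

variable {M : ℕ} {t : ℝ} {l e j : ℕ} {F G : ℝ → ℝ} {a b : ℕ → ℝ} {x y : ℝ}

theorem nearSet_succ_add_perturb_subset (h : Scales M t) (hF : Differentiable ℝ F)
    (ha : ∀ i, |a i| ≤ 1) :
    nearSet M t (l + 1) (F + perturb M t l a) ⊆ nearSet M t l F := by
  rintro x ⟨hval, hder⟩
  have hp := abs_perturb_le (M := M) h.pos.le l ha x
  have hp' := abs_deriv_perturb_le h.base_pos h.pos.le l ha x
  rw [deriv_add (hF x) ((lipDeriv_perturb h.base_pos h.pos.le l ha).differentiable x)] at hder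
  have hB := three_le_bumpBound
  have hr := pow_pos h.ratio_pos l
  have ht := pow_pos h.pos l
  constructor
  · calc |F x| = |(F x + perturb M t l a x) - perturb M t l a x| := by ring_nf
      _ ≤ (2 * bumpBound + 3) * ((t / M) ^ l * (1 / 2)) + bumpBound * (t / M) ^ l := by
          refine (abs_sub _ _).trans (add_le_add (hval.trans ?_) hp)
          rw [pow_succ]
          gcongr _ * (_ * ?_)
          exact h.ratio_le_half
      _ ≤ (2 * bumpBound + 3) * (t / M) ^ l := by nlinarith
  · calc |deriv F x| = |(deriv F x + deriv (perturb M t l a) x) - deriv (perturb M t l a) x| := by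
          ring_nf
      _ ≤ (3 * bumpBound + 6) * (t ^ l * (1 / 2)) + bumpBound * t ^ l := by
          refine (abs_sub _ _).trans (add_le_add (hder.trans ?_) hp')
          rw [pow_succ]
          gcongr _ * (_ * ?_)
          exact h.le_half
      _ ≤ (3 * bumpBound + 6) * t ^ l := by nlinarith

theorem div_mem_nearCells (h : Scales M t) (hF : Differentiable ℝ F) (ha : ∀ i, |a i| ≤ 1)
    (hj : j ∈ nearCells M t (l + 1) (F + perturb M t l a)) : j / M ∈ nearCells M t l F := by
  obtain ⟨x, ⟨hx, hx'⟩, rfl⟩ := mem_cells.1 hj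
  rw [cellIndex_succ_div h.base_pos]
  exact cellIndex_mem_cells (nearSet_succ_add_perturb_subset h hF ha hx) hx'

theorem abs_sub_le_of_cellIndex_eq (h : Scales M t) (hG : LipDeriv (2 * bumpBound * (t * M) ^ l) G)
    (hx : 0 ≤ x) (hy : 0 ≤ y) (hxy : cellIndex M (l + 1) x = cellIndex M (l + 1) y)
    (hder : |deriv G x| ≤ (3 * bumpBound + 6) * t ^ (l + 1)) :
    |G y - G x| ≤ (4 * bumpBound + 6) * (t / M) ^ (l + 1) := by
  have hM : (0 : ℝ) < M := Nat.cast_pos.2 h.base_pos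
  have ht := h.pos
  have hB := three_le_bumpBound
  have hd : |y - x| * M ^ (l + 1) ≤ 1 := abs_sub_mul_pow_le_one hy hx hxy.symm
  have hvar : 2 * bumpBound * (t * M) ^ l * |y - x| ≤ bumpBound * t ^ (l + 1) := by
    calc 2 * bumpBound * (t * M) ^ l * |y - x|
        ≤ (t * M) * bumpBound * (t * M) ^ l * |y - x| := by gcongr; exact h.two_le_mul
      _ = bumpBound * t ^ (l + 1) * (|y - x| * M ^ (l + 1)) := by rw [mul_pow]; ring
      _ ≤ bumpBound * t ^ (l + 1) := mul_le_of_le_one_right (by positivity) hd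
  calc |G y - G x| ≤ (|deriv G x| + 2 * bumpBound * (t * M) ^ l * |y - x|) * |y - x| :=
        hG.abs_sub_le x y
    _ ≤ ((4 * bumpBound + 6) * t ^ (l + 1)) * (1 / M ^ (l + 1)) := by
        gcongr
        · linarith
        · rwa [le_div_iff₀ (by positivity)]
    _ = (4 * bumpBound + 6) * (t / M) ^ (l + 1) := by rw [div_pow]; ring

theorem mem_nearSet_add_perturb_parityMix (hM : 0 < M) (hF : Differentiable ℝ F)
    (hx : x ∈ Icc (0 : ℝ) 1) (he : cellIndex M l x % 2 = e) :
    x ∈ nearSet M t (l + 1) (F + perturb M t l (parityMix e a b)) ↔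
      |(F + perturb M t l (parityMix e 0 b)) x + (t / M) ^ l * a (cellIndex M l x)| ≤
          (2 * bumpBound + 3) * (t / M) ^ (l + 1) ∧
        |deriv (F + perturb M t l (parityMix e 0 b)) x| ≤ (3 * bumpBound + 6) * t ^ (l + 1) := by
  have hdiff (c : ℕ → ℝ) : DifferentiableAt ℝ (perturb M t l c) x :=
    (hasDerivAt_perturb hM t l c x).differentiableAt
  rw [nearSet, mem_ofPred_eq, deriv_add (hF x) (hdiff _), deriv_add (hF x) (hdiff _),
    deriv_perturb_parityMix a b hM hx he, Pi.add_apply, Pi.add_apply,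
    perturb_parityMix a b hx he, add_assoc]

theorem mem_nearCells_add_perturb_parityMix (hM : 0 < M) (hF : Differentiable ℝ F)
    (he : j / M % 2 = e) :
    j ∈ nearCells M t (l + 1) (F + perturb M t l (parityMix e a b)) ↔
      j ∈ nearCells M t (l + 1) (F + perturb M t l (parityMix e (fun _ ↦ a (j / M)) b)) := by
  simp only [nearCells, mem_cells, mem_inter_iff, and_assoc]
  refine exists_congr fun x ↦ ?_
  rw [← and_assoc, ← and_assoc, and_congr_left_iff]
  rintro rfl
  rw [and_congr_left_iff]
  intro hx
  rw [cellIndex_succ_div hM] at he ⊢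
  rw [mem_nearSet_add_perturb_parityMix hM hF hx he, mem_nearSet_add_perturb_parityMix hM hF hx he]

theorem abs_sub_lt_of_mem_nearCells (h : Scales M t) (hF : LipDeriv (bumpBound * (t * M) ^ l) F)
    (hb : ∀ i, |b i| ≤ 1) (he : j / M % 2 = e) {u v : ℝ}
    (hu : j ∈ nearCells M t (l + 1) (F + perturb M t l (parityMix e (fun _ ↦ u) b)))
    (hv : j ∈ nearCells M t (l + 1) (F + perturb M t l (parityMix e (fun _ ↦ v) b))) :
    |u - v| * (4 * M) < 1 := by
  obtain ⟨x, ⟨hxu, hx⟩, rfl⟩ := mem_cells.1 hu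
  obtain ⟨y, ⟨hyv, hy⟩, hxy⟩ := mem_cells.1 hv
  have hparity {z : ℝ} (hz : cellIndex M (l + 1) z = cellIndex M (l + 1) x) :
      cellIndex M l z % 2 = e := by
    rw [← cellIndex_succ_div h.base_pos, hz, he]
  rw [mem_nearSet_add_perturb_parityMix h.base_pos hF.differentiable hx (hparity rfl)] at hxu
  rw [mem_nearSet_add_perturb_parityMix h.base_pos hF.differentiable hy (hparity hxy)] at hyv
  set G := F + perturb M t l (parityMix e 0 b)
  have hG : LipDeriv (2 * bumpBound * (t * M) ^ l) G :=
    (hF.add (lipDeriv_perturb h.base_pos h.pos.le l (abs_parityMix_le (by simp) hb e))).mono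
      (by linarith)
  have hGxy := abs_sub_le_of_cellIndex_eq h hG hx.1 hy.1 hxy.symm hxu.2
  have hM : (0 : ℝ) < M := Nat.cast_pos.2 h.base_pos
  have huv : (t / M) ^ l * |u - v| ≤ (t / M) ^ l * ((8 * bumpBound + 12) * (t / M)) := by
    calc (t / M) ^ l * |u - v|
        = |(G x + (t / M) ^ l * u) - (G y + (t / M) ^ l * v) + (G y - G x)| := by
          rw [← abs_of_pos (pow_pos h.ratio_pos l), ← abs_mul, abs_of_pos (pow_pos h.ratio_pos l)]
          ring_nf
      _ ≤ |G x + (t / M) ^ l * u| + |G y + (t / M) ^ l * v| + |G y - G x| :=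
          (abs_add_le _ _).trans (add_le_add (abs_sub _ _) le_rfl)
      _ ≤ (t / M) ^ l * ((8 * bumpBound + 12) * (t / M)) := by
          have h₁ := hxu.1
          have h₂ := hyv.1
          rw [pow_succ] at h₁ h₂ hGxy
          linarith
  calc |u - v| * (4 * M) ≤ (8 * bumpBound + 12) * (t / M) * (4 * M) := by
        gcongr
        exact le_of_mul_le_mul_left huv (pow_pos h.ratio_pos l)
    _ = 4 * (8 * bumpBound + 12) * t := by field_simp
    _ < 1 := h.small

end NearCells

theorem sum_exp_le_card_mul_exp {κ : Type*} [Fintype κ] {Y : κ → ℝ} (hY : ∀ k, 0 ≤ Y k)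
    (hsum : ∑ k, Y k ≤ 1) :
    ∑ k, Real.exp (Y k) ≤ Fintype.card κ * Real.exp (2 / Fintype.card κ) := by
  rcases isEmpty_or_nonempty κ with _ | _
  · simp
  have hexp (k : κ) : Real.exp (Y k) ≤ 1 + 2 * Y k := by
    have hk : Y k ≤ 1 :=
      (Finset.single_le_sum (fun i _ ↦ hY i) (Finset.mem_univ k)).trans hsum
    have := Real.abs_exp_sub_one_sub_id_le (x := Y k) (by rwa [abs_of_nonneg (hY k)])
    nlinarith [(abs_le.1 this).2, hY k]
  have : (0 : ℝ) < Fintype.card κ := Nat.cast_pos.2 Fintype.card_pos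
  calc ∑ k, Real.exp (Y k) ≤ ∑ k, (1 + 2 * Y k) := Finset.sum_le_sum fun k _ ↦ hexp k
    _ = Fintype.card κ + 2 * ∑ k, Y k := by simp [Finset.sum_add_distrib, Finset.mul_sum]
    _ ≤ Fintype.card κ + 2 * 1 := by gcongr
    _ = Fintype.card κ * (2 / Fintype.card κ + 1) := by field_simp; ring
    _ ≤ Fintype.card κ * Real.exp (2 / Fintype.card κ) := by
        gcongr
        exact Real.add_one_le_exp _

section Averaging

variable {σ ι κ : Type*} [DecidableEq ι] [Fintype κ] (s : Finset σ) (p : σ → ι)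
  (R : σ → κ → Prop) [∀ k, DecidablePred fun j ↦ R j k] {m : ℕ}

theorem sum_exp_card_fiber_le (hp : ∀ i, #{j ∈ s | p j = i} ≤ m)
    (hR : ∀ j ∈ s, ∀ k k', R j k → R j k' → k = k') (i : ι) :
    ∑ k, Real.exp (#{j ∈ s | p j = i ∧ R j k} / m) ≤
      Fintype.card κ * Real.exp (2 / Fintype.card κ) := by
  refine sum_exp_le_card_mul_exp (fun k ↦ by positivity) ?_
  have hsum : ∑ k, #{j ∈ s | p j = i ∧ R j k} ≤ m := by
    classical
    rw [← Finset.card_biUnion]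
    · refine le_trans (Finset.card_le_card fun j hj ↦ ?_) (hp i)
      obtain ⟨k, -, hk⟩ := Finset.mem_biUnion.1 hj
      rw [Finset.mem_filter] at hk ⊢
      exact ⟨hk.1, hk.2.1⟩
    · refine fun k _ k' _ hne ↦ Finset.disjoint_left.2 fun j hj hj' ↦ hne ?_
      rw [Finset.mem_filter] at hj hj'
      exact hR j hj.1 k k' hj.2.2 hj'.2.2
  rw [← Finset.sum_div]
  exact div_le_one_of_le₀ (by exact_mod_cast hsum) (Nat.cast_nonneg m)

theorem sum_exp_card_filter_le [Fintype ι] (hp : ∀ i, #{j ∈ s | p j = i} ≤ m)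
    (hR : ∀ j ∈ s, ∀ k k', R j k → R j k' → k = k') {G : Finset ι}
    (hG : ∀ j ∈ s, ∀ k, R j k → p j ∈ G) :
    ∑ c : ι → κ, Real.exp (#{j ∈ s | R j (c (p j))} / m) ≤
      (Fintype.card κ : ℝ) ^ Fintype.card ι * Real.exp (2 / Fintype.card κ) ^ #G := by
  have hsplit (c : ι → κ) :
      #{j ∈ s | R j (c (p j))} = ∑ i, #{j ∈ s | p j = i ∧ R j (c i)} := by
    rw [Finset.card_eq_sum_card_fiberwise (f := p) (t := Finset.univ) (fun _ _ ↦ by simp)]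
    refine Finset.sum_congr rfl fun i _ ↦ ?_
    rw [Finset.filter_filter]
    congr 1
    ext j
    simp only [Finset.mem_filter]
    grind
  have hfactor (i : ι) : ∑ k, Real.exp (#{j ∈ s | p j = i ∧ R j k} / m) ≤
      Fintype.card κ * if i ∈ G then Real.exp (2 / Fintype.card κ) else 1 := by
    split_ifs with hi
    · exact sum_exp_card_fiber_le s p R hp hR i
    · have hempty (k : κ) : #{j ∈ s | p j = i ∧ R j k} = 0 :=
        Finset.card_eq_zero.2 <| Finset.filter_false_of_mem fun j hj h ↦
          hi (h.1 ▸ hG j hj k h.2)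
      simp [hempty]
  calc ∑ c : ι → κ, Real.exp (#{j ∈ s | R j (c (p j))} / m)
      = ∑ c : ι → κ, ∏ i, Real.exp (#{j ∈ s | p j = i ∧ R j (c i)} / m) := by
        refine Finset.sum_congr rfl fun c _ ↦ ?_
        rw [hsplit, ← Real.exp_sum, Nat.cast_sum, Finset.sum_div]
    _ = ∏ i, ∑ k, Real.exp (#{j ∈ s | p j = i ∧ R j k} / m) := by
        rw [Finset.prod_univ_sum, Fintype.piFinset_univ]
    _ ≤ ∏ i, (Fintype.card κ * if i ∈ G then Real.exp (2 / Fintype.card κ) else 1) :=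
        Finset.prod_le_prod (fun _ _ ↦ by positivity) fun i _ ↦ hfactor i
    _ = (Fintype.card κ : ℝ) ^ Fintype.card ι * Real.exp (2 / Fintype.card κ) ^ #G := by
        rw [Finset.prod_mul_distrib]
        simp

end Averaging

theorem exp_add_div_two_mul_le (p q m : ℝ) :
    Real.exp ((p + q) / (2 * m)) ≤ (Real.exp (p / m) + Real.exp (q / m)) / 2 := by
  have hsq (r : ℝ) : Real.exp (r / m) = Real.exp (r / (2 * m)) ^ 2 := by
    rw [← Real.exp_nat_mul]
    congr 1
    push_cast
    ring
  rw [hsq, hsq, add_div, Real.exp_add]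
  linarith [two_mul_le_add_sq (Real.exp (p / (2 * m))) (Real.exp (q / (2 * m)))]

/-- The coefficient with which the option `k` perturbs a cell: one of `4 * M` equally spaced
numbers in `[0, 1)`. -/
noncomputable def optionCoeff {M : ℕ} (k : Fin (4 * M)) : ℝ := k / (4 * M)

theorem abs_optionCoeff_le {M : ℕ} (k : Fin (4 * M)) : |optionCoeff k| ≤ 1 := by
  rw [optionCoeff, abs_of_nonneg (by positivity)]
  exact div_le_one_of_le₀ (by exact_mod_cast k.2.le) (by positivity)

theorem eq_of_abs_optionCoeff_sub_lt {M : ℕ} {k k' : Fin (4 * M)}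
    (h : |optionCoeff k - optionCoeff k'| * (4 * M) < 1) : k = k' := by
  have hM : (0 : ℝ) < 4 * M := by exact_mod_cast k.pos
  rw [optionCoeff, optionCoeff, ← sub_div, abs_div, abs_of_pos hM, div_mul_cancel₀ _ hM.ne'] at h
  have hlt : |((k : ℕ) : ℤ) - (k' : ℕ)| < 1 := by exact_mod_cast h
  exact Fin.ext (by exact_mod_cast sub_eq_zero.1 (Int.abs_lt_one_iff.1 hlt))

/-- The choices of an option for every cell of level `l`. -/
abbrev Options (M l : ℕ) : Type := Fin (M ^ l + 1) → Fin (4 * M)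

/-- The coefficients prescribed by the options `c`. -/
noncomputable def gridCoeff {M l : ℕ} (c : Options M l) (i : ℕ) : ℝ :=
  optionCoeff (c (Fin.ofNat _ i))

theorem abs_gridCoeff_le {M l : ℕ} (c : Options M l) (i : ℕ) : |gridCoeff c i| ≤ 1 :=
  abs_optionCoeff_le _

theorem card_filter_ofNat_div_le {M : ℕ} (hM : 0 < M) {l : ℕ} {s : Finset ℕ}
    (hs : s ⊆ Finset.range (M ^ (l + 1) + 1)) (i : Fin (M ^ l + 1)) :
    #{j ∈ s | Fin.ofNat (M ^ l + 1) (j / M) = i} ≤ M := by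
  refine (Finset.card_le_card fun j hj ↦ ?_).trans (card_filter_div_eq_le hM s i)
  obtain ⟨hjs, rfl⟩ := Finset.mem_filter.1 hj
  have hlt : j / M < M ^ l + 1 := by
    have hj : j < M ^ (l + 1) + 1 := Finset.mem_range.1 (hs hjs)
    refine Nat.lt_succ_of_le (Nat.div_le_of_le_mul ?_)
    rw [← pow_succ']
    exact Nat.le_of_lt_succ hj
  exact Finset.mem_filter.2 ⟨hjs, (Nat.mod_eq_of_lt hlt).symm⟩

section Average

variable {M : ℕ} {t : ℝ} {l : ℕ} {F : ℝ → ℝ}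

theorem sum_exp_card_nearCells_filter_le (h : Scales M t)
    (hF : LipDeriv (bumpBound * (t * M) ^ l) F) (e : ℕ) {b : ℕ → ℝ} (hb : ∀ i, |b i| ≤ 1) :
    ∑ c : Options M l, Real.exp (#{j ∈ nearCells M t (l + 1)
        (F + perturb M t l (parityMix e (gridCoeff c) b)) | j / M % 2 = e} / M) ≤
      ((4 * M : ℕ) : ℝ) ^ (M ^ l + 1) * Real.exp (#(nearCells M t l F) / (2 * M)) := by
  classical
  have hM : 0 < M := h.base_pos
  let s : Finset ℕ := {j ∈ Finset.range (M ^ (l + 1) + 1) | j / M % 2 = e}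
  let p (j : ℕ) : Fin (M ^ l + 1) := Fin.ofNat _ (j / M)
  let R (j : ℕ) (k : Fin (4 * M)) : Prop :=
    j ∈ nearCells M t (l + 1) (F + perturb M t l (parityMix e (fun _ ↦ optionCoeff k) b))
  have hR (j : ℕ) (hj : j ∈ s) (k k' : Fin (4 * M)) (hk : R j k) (hk' : R j k') : k = k' :=
    eq_of_abs_optionCoeff_sub_lt <|
      abs_sub_lt_of_mem_nearCells h hF hb (Finset.mem_filter.1 hj).2 hk hk'
  have hG (j : ℕ) (_ : j ∈ s) (k : Fin (4 * M)) (hk : R j k) :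
      p j ∈ (nearCells M t l F).image (Fin.ofNat (M ^ l + 1)) :=
    Finset.mem_image_of_mem _ <| div_mem_nearCells h hF.differentiable
      (abs_parityMix_le (fun _ ↦ abs_optionCoeff_le k) hb e) hk
  have hnear (c : Options M l) : #{j ∈ nearCells M t (l + 1)
      (F + perturb M t l (parityMix e (gridCoeff c) b)) | j / M % 2 = e} ≤
      #{j ∈ s | R j (c (p j))} := by
    refine Finset.card_le_card fun j hj ↦ ?_
    obtain ⟨hj, he⟩ := Finset.mem_filter.1 hj
    rw [mem_nearCells_add_perturb_parityMix hM hF.differentiable he] at hj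
    simp only [s, Finset.mem_filter]
    exact ⟨⟨cells_subset_range _ _ _ hj, he⟩, hj⟩
  calc _ ≤ ∑ c : Options M l, Real.exp (#{j ∈ s | R j (c (p j))} / M) :=
        Finset.sum_le_sum fun c _ ↦ Real.exp_le_exp.2 <|
          div_le_div_of_nonneg_right (Nat.cast_le.2 (hnear c)) M.cast_nonneg
    _ ≤ ((4 * M : ℕ) : ℝ) ^ (M ^ l + 1) * Real.exp (2 / (4 * M : ℕ)) ^
          #((nearCells M t l F).image (Fin.ofNat (M ^ l + 1))) := by
        simpa only [Fintype.card_fin] using sum_exp_card_filter_le s p R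
          (card_filter_ofNat_div_le hM (Finset.filter_subset _ _)) hR hG
    _ ≤ ((4 * M : ℕ) : ℝ) ^ (M ^ l + 1) * Real.exp (2 / (4 * M : ℕ)) ^ #(nearCells M t l F) := by
        gcongr
        · exact Real.one_le_exp (by positivity)
        · exact Finset.card_image_le
    _ = ((4 * M : ℕ) : ℝ) ^ (M ^ l + 1) * Real.exp (#(nearCells M t l F) / (2 * M)) := by
        rw [← Real.exp_nat_mul]
        congr 2
        push_cast
        ring

theorem card_eq_card_filter_parity_add (s : Finset ℕ) (M : ℕ) :
    #s = #{j ∈ s | j / M % 2 = 0} + #{j ∈ s | j / M % 2 = 1} := by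
  rw [← Finset.card_filter_add_card_filter_not (s := s) fun j ↦ j / M % 2 = 0]
  simp only [Nat.mod_two_ne_zero]

theorem sum_exp_card_nearCells_le (h : Scales M t) (hF : LipDeriv (bumpBound * (t * M) ^ l) F) :
    ∑ c : Options M l × Options M l,
      Real.exp (#(nearCells M t (l + 1) (F + perturb M t l
        (parityMix 0 (gridCoeff c.1) (gridCoeff c.2)))) / (2 * M)) ≤
    ∑ _c : Options M l × Options M l,
      Real.exp (#(nearCells M t l F) / (2 * M)) := by
  let near (c d : Options M l) : Finset ℕ :=
    nearCells M t (l + 1) (F + perturb M t l (parityMix 0 (gridCoeff c) (gridCoeff d)))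
  set K : ℝ := ((4 * M : ℕ) : ℝ) ^ (M ^ l + 1)
  set P : ℝ := Real.exp (#(nearCells M t l F) / (2 * M))
  have heven (d : Options M l) :
      ∑ c, Real.exp (#{j ∈ near c d | j / M % 2 = 0} / M) ≤ K * P :=
    sum_exp_card_nearCells_filter_le h hF 0 (abs_gridCoeff_le d)
  have hodd (c : Options M l) :
      ∑ d, Real.exp (#{j ∈ near c d | j / M % 2 = 1} / M) ≤ K * P := by
    simpa only [near, parityMix_zero_eq_one] using
      sum_exp_card_nearCells_filter_le h hF 1 (abs_gridCoeff_le c)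
  have hsum : ∑ _c : Options M l, K * P = K * (K * P) := by
    simp [K]
  calc _ ≤ ∑ c : Options M l × Options M l,
        (Real.exp (#{j ∈ near c.1 c.2 | j / M % 2 = 0} / M) +
          Real.exp (#{j ∈ near c.1 c.2 | j / M % 2 = 1} / M)) / 2 := by
        refine Finset.sum_le_sum fun c _ ↦ ?_
        rw [card_eq_card_filter_parity_add (nearCells _ _ _ _) M, Nat.cast_add]
        exact exp_add_div_two_mul_le _ _ _
    _ = (∑ d, ∑ c, Real.exp (#{j ∈ near c d | j / M % 2 = 0} / M) +
          ∑ c, ∑ d, Real.exp (#{j ∈ near c d | j / M % 2 = 1} / M)) / 2 := by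
        rw [← Finset.sum_div, Finset.sum_add_distrib, Fintype.sum_prod_type_right,
          Fintype.sum_prod_type]
    _ ≤ (∑ _d : Options M l, K * P +
          ∑ _c : Options M l, K * P) / 2 := by
        gcongr with d _ c _
        exacts [heven d, hodd c]
    _ = K * (K * P) := by rw [hsum]; ring
    _ = _ := by simp [K, mul_assoc]

end Average

section Potential

variable {ι : Type*} {M : ℕ} {t : ℝ} {w : ι → ENNReal} {L : ι → ℝ × ℝ} {l : ℕ} {F : ℝ → ℝ}

/-- The potential of `F` at level `l` for the lines `L` with weights `w`: it is large as soon as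
`F` is near one of the lines in many cells. -/
noncomputable def potential (w : ι → ENNReal) (L : ι → ℝ × ℝ) (M : ℕ) (t : ℝ) (l : ℕ)
    (F : ℝ → ℝ) : ENNReal :=
  ∑' i, w i * ENNReal.ofReal (Real.exp (#(nearCells M t l (F - line (L i))) / (2 * M)))

theorem exists_potential_add_perturb_le (w : ι → ENNReal) (L : ι → ℝ × ℝ) (h : Scales M t)
    (hF : LipDeriv (bumpBound * (t * M) ^ l) F) :
    ∃ a : ℕ → ℝ, (∀ i, |a i| ≤ 1) ∧
      potential w L M t (l + 1) (F + perturb M t l a) ≤ potential w L M t l F := by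
  by_contra! hlt
  have : NeZero (4 * M) := ⟨by have := h.base_pos; lia⟩
  refine (ENNReal.sum_lt_sum_of_nonempty
    (Finset.univ_nonempty (α := Options M l × Options M l)) fun c _ ↦
      hlt _ (abs_parityMix_le (abs_gridCoeff_le c.1) (abs_gridCoeff_le c.2) 0)).not_ge ?_
  simp only [potential]
  rw [← Summable.tsum_finsetSum fun _ _ ↦ ENNReal.summable,
    ← Summable.tsum_finsetSum fun _ _ ↦ ENNReal.summable]
  refine ENNReal.tsum_le_tsum fun i ↦ ?_
  rw [← Finset.mul_sum, ← Finset.mul_sum,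
    ← ENNReal.ofReal_sum_of_nonneg fun _ _ ↦ (Real.exp_pos _).le,
    ← ENNReal.ofReal_sum_of_nonneg fun _ _ ↦ (Real.exp_pos _).le]
  refine mul_le_mul' le_rfl (ENNReal.ofReal_le_ofReal ?_)
  simpa only [add_sub_right_comm] using sum_exp_card_nearCells_le h (hF.sub_line (L i))

theorem potential_level_zero_le (w : ι → ENNReal) (L : ι → ℝ × ℝ) (h : Scales M t) (F : ℝ → ℝ) :
    potential w L M t 0 F ≤ (∑' i, w i) * 3 := by
  rw [potential, ← ENNReal.tsum_mul_right]
  gcongr with i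
  rw [ENNReal.ofReal_le_ofNat]
  have hM : (0 : ℝ) < M := Nat.cast_pos.2 h.base_pos
  have hM1 : (1 : ℝ) ≤ M := Nat.one_le_cast.2 h.base_pos
  have hcard : (#(nearCells M t 0 (F - line (L i))) : ℝ) ≤ 2 := by
    exact_mod_cast card_cells_le M 0 _
  calc Real.exp (#(nearCells M t 0 (F - line (L i))) / (2 * M)) ≤ Real.exp 1 := by
        gcongr
        rw [div_le_one (by positivity)]
        linarith
    _ ≤ 3 := Real.exp_one_lt_three.le

end Potential

/-- The sum of the perturbations of the levels below `n`, with coefficients `a l` on level `l`. -/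
noncomputable def partialSum (M : ℕ) (t : ℝ) (a : ℕ → ℕ → ℝ) (n : ℕ) : ℝ → ℝ :=
  ∑ l ∈ Finset.range n, perturb M t l (a l)

section PartialSum

variable {M : ℕ} {t : ℝ} {a : ℕ → ℕ → ℝ}

theorem partialSum_succ (M : ℕ) (t : ℝ) (a : ℕ → ℕ → ℝ) (n : ℕ) :
    partialSum M t a (n + 1) = partialSum M t a n + perturb M t n (a n) :=
  Finset.sum_range_succ _ n

theorem lipDeriv_partialSum (h : Scales M t) (ha : ∀ l i, |a l i| ≤ 1) (n : ℕ) :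
    LipDeriv (bumpBound * (t * M) ^ n) (partialSum M t a n) := by
  have hB := three_le_bumpBound
  induction n with
  | zero => exact LipDeriv.const_zero.mono (by rw [pow_zero]; linarith)
  | succ n ih =>
    rw [partialSum_succ]
    refine (ih.add (lipDeriv_perturb h.base_pos h.pos.le n (ha n))).mono ?_
    have := ih.nonneg
    rw [pow_succ]
    nlinarith [h.two_le_mul]

theorem exists_potential_partialSum_le {ι : Type*} (w : ι → ENNReal) (L : ι → ℝ × ℝ)
    (h : Scales M t) :
    ∃ a : ℕ → ℕ → ℝ, (∀ l i, |a l i| ≤ 1) ∧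
      ∀ l, potential w L M t l (partialSum M t a l) ≤ (∑' i, w i) * 3 := by
  have hstep (l : ℕ) (F : ℝ → ℝ) : ∃ a : ℕ → ℝ, (∀ i, |a i| ≤ 1) ∧
      (LipDeriv (bumpBound * (t * M) ^ l) F →
        potential w L M t (l + 1) (F + perturb M t l a) ≤ potential w L M t l F) := by
    by_cases hF : LipDeriv (bumpBound * (t * M) ^ l) F
    · obtain ⟨a, ha, hpot⟩ := exists_potential_add_perturb_le w L h hF
      exact ⟨a, ha, fun _ ↦ hpot⟩
    · exact ⟨0, by simp, fun hF' ↦ absurd hF' hF⟩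
  choose next hnext hpot using hstep
  let F (l : ℕ) : ℝ → ℝ := Nat.rec 0 (fun l F ↦ F + perturb M t l (next l F)) l
  have hF (l : ℕ) : partialSum M t (fun l ↦ next l (F l)) l = F l := by
    induction l with
    | zero => rfl
    | succ l ih => rw [partialSum_succ, ih]
  have hbound (l i : ℕ) : |next l (F l) i| ≤ 1 := hnext l (F l) i
  refine ⟨fun l ↦ next l (F l), hbound, fun l ↦ ?_⟩
  rw [hF]
  induction l with
  | zero => exact potential_level_zero_le w L h 0
  | succ l ih => exact (hpot l (F l) (hF l ▸ lipDeriv_partialSum h hbound l)).trans ih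

theorem tsum_sigma_weight_le_one {β : Type*} (T : ℕ → Finset β) :
    ∑' i : Σ n, T n, (2⁻¹ : ENNReal) ^ (i.1 + 1) * (#(T i.1) : ENNReal)⁻¹ ≤ 1 := by
  calc ∑' i : Σ n, T n, (2⁻¹ : ENNReal) ^ (i.1 + 1) * (#(T i.1) : ENNReal)⁻¹
      = _ := ENNReal.tsum_sigma fun n (_ : T n) ↦ (2⁻¹ : ENNReal) ^ (n + 1) * (#(T n) : ENNReal)⁻¹
    _ = ∑' n, ∑' _ : T n, (2⁻¹ : ENNReal) ^ (n + 1) * (#(T n) : ENNReal)⁻¹ := rfl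
    _ ≤ ∑' n, (2⁻¹ : ENNReal) ^ (n + 1) := by
        gcongr with n
        rw [tsum_fintype, Finset.sum_const, Finset.card_univ, Fintype.card_coe, nsmul_eq_mul,
          mul_left_comm]
        exact mul_le_of_le_one_right' (ENNReal.mul_inv_le_one _)
    _ = 1 := by
        rw [ENNReal.tsum_geometric_add_one, ENNReal.one_sub_inv_two, inv_inv]
        exact ENNReal.inv_mul_cancel two_ne_zero ENNReal.ofNat_ne_top

theorem exists_card_nearCells_partialSum_le (h : Scales M t) (T : ℕ → Finset (ℝ × ℝ)) :
    ∃ a : ℕ → ℕ → ℝ, (∀ l i, |a l i| ≤ 1) ∧ ∀ n, ∀ p ∈ T n, ∀ l,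
      (#(nearCells M t l (partialSum M t a l - line p)) : ℝ) ≤
        2 * M * Real.log (3 * (2 ^ (n + 1) * #(T n))) := by
  obtain ⟨a, ha, hpot⟩ := exists_potential_partialSum_le
    (fun i : Σ n, T n ↦ (2⁻¹ : ENNReal) ^ (i.1 + 1) * (#(T i.1) : ENNReal)⁻¹) (fun i ↦ i.2) h
  refine ⟨a, ha, fun n p hp l ↦ ?_⟩
  have hM : (0 : ℝ) < M := Nat.cast_pos.2 h.base_pos
  have hT : (0 : ℝ) < #(T n) := Nat.cast_pos.2 (Finset.card_pos.2 ⟨p, hp⟩)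
  set X := (#(nearCells M t l (partialSum M t a l - line p)) : ℝ)
  have hterm : (2⁻¹ : ENNReal) ^ (n + 1) * (#(T n) : ENNReal)⁻¹ *
      ENNReal.ofReal (Real.exp (X / (2 * M))) ≤ 3 :=
    calc _ ≤ _ := ENNReal.le_tsum (⟨n, p, hp⟩ : Σ n, T n)
      _ ≤ _ := hpot l
      _ ≤ 1 * 3 := by gcongr; exact tsum_sigma_weight_le_one T
      _ = 3 := one_mul 3
  have hexp : Real.exp (X / (2 * M)) ≤ 3 * (2 ^ (n + 1) * #(T n)) := by
    have h2n : (2⁻¹ : ENNReal) ^ (n + 1) * (#(T n) : ENNReal)⁻¹ =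
        ENNReal.ofReal (2 ^ (n + 1) * #(T n))⁻¹ := by
      rw [ENNReal.ofReal_inv_of_pos (by positivity), ENNReal.ofReal_mul (by positivity),
        ENNReal.ofReal_pow zero_le_two, ENNReal.ofReal_ofNat, ENNReal.ofReal_natCast,
        ENNReal.mul_inv (by simp) (by simp), ENNReal.inv_pow]
    rw [h2n, ← ENNReal.ofReal_mul (by positivity), ENNReal.ofReal_le_ofNat,
      inv_mul_le_iff₀ (by positivity)] at hterm
    linarith
  rw [← Real.le_log_iff_exp_le (by positivity), div_le_iff₀ (by positivity)] at hexp
  linarith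

end PartialSum

theorem abs_sub_sum_range_le {u : ℕ → ℝ} {C r s : ℝ} (hr : r ≤ 1 / 2)
    (hu : ∀ l, |u l| ≤ C * r ^ l) (hs : HasSum u s) (n : ℕ) :
    |s - ∑ l ∈ Finset.range n, u l| ≤ 2 * C * r ^ n := by
  have hnonneg : 0 ≤ C * r ^ n := (abs_nonneg _).trans (hu n)
  rw [abs_sub_comm]
  refine (norm_sub_le_of_geometric_bound_of_hasSum (by linarith) hu hs n).trans ?_
  rw [div_le_iff₀ (by linarith)]
  nlinarith

/-- `f` is the limit of the functions `F l`, with the regularity and the errors that perturbations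
of the levels from `l` on cause. -/
structure ScaleApprox (M : ℕ) (t : ℝ) (F : ℕ → ℝ → ℝ) (f : ℝ → ℝ) : Prop where
  lipDeriv : ∀ l, LipDeriv (bumpBound * (t * M) ^ l) (F l)
  differentiable : Differentiable ℝ f
  abs_sub_le : ∀ l x, |f x - F l x| ≤ 2 * bumpBound * (t / M) ^ l
  abs_deriv_sub_le : ∀ l x, |deriv f x - deriv (F l) x| ≤ 2 * bumpBound * t ^ l

/-- The sum of the perturbations of all levels, with coefficients `a l` on level `l`. -/
noncomputable def bumpSeries (M : ℕ) (t : ℝ) (a : ℕ → ℕ → ℝ) (x : ℝ) : ℝ :=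
  ∑' l, perturb M t l (a l) x

section BumpSeries

variable {M : ℕ} {t : ℝ} {a : ℕ → ℕ → ℝ}

theorem scaleApprox_bumpSeries (h : Scales M t) (ha : ∀ l i, |a l i| ≤ 1) :
    ScaleApprox M t (partialSum M t a) (bumpSeries M t a) := by
  have hval (x : ℝ) (l : ℕ) := abs_perturb_le (M := M) h.pos.le l (ha l) x
  have hder (x : ℝ) (l : ℕ) := abs_deriv_perturb_le h.base_pos h.pos.le l (ha l) x
  have hdiff (l : ℕ) := (lipDeriv_perturb h.base_pos h.pos.le l (ha l)).differentiable
  have hgeom {r : ℝ} (hr : 0 ≤ r) (hr' : r ≤ 1 / 2) : Summable fun l ↦ bumpBound * r ^ l :=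
    (summable_geometric_of_lt_one hr (by linarith)).mul_left _
  have hsum (x : ℝ) : Summable fun l ↦ perturb M t l (a l) x :=
    .of_norm_bounded (hgeom h.ratio_pos.le h.ratio_le_half) (hval x)
  have hsum' (x : ℝ) : Summable fun l ↦ deriv (perturb M t l (a l)) x :=
    .of_norm_bounded (hgeom h.pos.le h.le_half) (hder x)
  have hderiv (x : ℝ) :
      HasDerivAt (bumpSeries M t a) (∑' l, deriv (perturb M t l (a l)) x) x :=
    hasDerivAt_tsum (hgeom h.pos.le h.le_half) (fun l x ↦ (hdiff l x).hasDerivAt)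
      (fun l x ↦ hder x l) (hsum 0) x
  refine ⟨lipDeriv_partialSum h ha, fun x ↦ (hderiv x).differentiableAt, fun l x ↦ ?_,
    fun l x ↦ ?_⟩
  · rw [partialSum, Finset.sum_apply]
    exact abs_sub_sum_range_le h.ratio_le_half (hval x) (hsum x).hasSum l
  · rw [partialSum, deriv_sum fun l _ ↦ hdiff l x, (hderiv x).deriv]
    exact abs_sub_sum_range_le h.le_half (hder x) (hsum' x).hasSum l

theorem abs_bumpSeries_le (h : Scales M t) (ha : ∀ l i, |a l i| ≤ 1) (x : ℝ) :
    |bumpSeries M t a x| ≤ 2 * bumpBound := by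
  simpa [partialSum] using (scaleApprox_bumpSeries h ha).abs_sub_le 0 x

theorem abs_deriv_bumpSeries_le (h : Scales M t) (ha : ∀ l i, |a l i| ≤ 1) (x : ℝ) :
    |deriv (bumpSeries M t a) x| ≤ 2 * bumpBound := by
  simpa [partialSum] using (scaleApprox_bumpSeries h ha).abs_deriv_sub_le 0 x

end BumpSeries

namespace ScaleApprox

variable {M : ℕ} {t : ℝ} {F : ℕ → ℝ → ℝ} {f : ℝ → ℝ}

theorem sub_line (hf : ScaleApprox M t F f) (p : ℝ × ℝ) :
    ScaleApprox M t (fun l ↦ F l - line p) (f - line p) where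
  lipDeriv l := (hf.lipDeriv l).sub_line p
  differentiable := hf.differentiable.sub fun x ↦ (hasDerivAt_line p x).differentiableAt
  abs_sub_le l x := by simpa using hf.abs_sub_le l x
  abs_deriv_sub_le l x := by
    simpa [deriv_sub_line hf.differentiable, deriv_sub_line (hf.lipDeriv l).differentiable]
      using hf.abs_deriv_sub_le l x

theorem abs_deriv_sub_deriv_le (hf : ScaleApprox M t F f) (ht : 0 < t) {l : ℕ} {x y : ℝ}
    (hxy : |x - y| * M ^ l ≤ 1) : |deriv f x - deriv f y| ≤ 5 * bumpBound * t ^ l := by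
  have hB := three_le_bumpBound
  have hF : |deriv (F l) x - deriv (F l) y| ≤ bumpBound * t ^ l :=
    calc |deriv (F l) x - deriv (F l) y| ≤ bumpBound * (t * M) ^ l * |x - y| :=
          (hf.lipDeriv l).abs_deriv_sub_le x y
      _ = bumpBound * t ^ l * (|x - y| * M ^ l) := by rw [mul_pow]; ring
      _ ≤ bumpBound * t ^ l := mul_le_of_le_one_right (by positivity) hxy
  calc |deriv f x - deriv f y|
      = |(deriv f x - deriv (F l) x) + (deriv (F l) x - deriv (F l) y) -
          (deriv f y - deriv (F l) y)| := by ring_nf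
    _ ≤ 2 * bumpBound * t ^ l + bumpBound * t ^ l + 2 * bumpBound * t ^ l :=
        (abs_sub _ _).trans (add_le_add ((abs_add_le _ _).trans
          (add_le_add (hf.abs_deriv_sub_le l x) hF)) (hf.abs_deriv_sub_le l y))
    _ = 5 * bumpBound * t ^ l := by ring

theorem abs_deriv_sub_deriv_le_rpow {α : ℝ} (hf : ScaleApprox M t F f) (h : Scales M t)
    (hα : 0 < α) (htα : t = (M : ℝ) ^ (-α)) {x y : ℝ} (hx : x ∈ Icc (0 : ℝ) 1)
    (hy : y ∈ Icc (0 : ℝ) 1) :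
    |deriv f x - deriv f y| ≤ 5 * bumpBound / t * |x - y| ^ α := by
  obtain rfl | hne := eq_or_ne x y
  · simp [Real.zero_rpow hα.ne']
  have ht := h.pos
  have hM : (0 : ℝ) < M := Nat.cast_pos.2 h.base_pos
  obtain ⟨l, hl, hl'⟩ := exists_nat_pow_near_of_lt_one (abs_pos.2 (sub_ne_zero.2 hne))
    (abs_sub_le_iff.2 ⟨by linarith [hx.2, hy.1], by linarith [hx.1, hy.2]⟩)
    (inv_pos.2 hM) (inv_lt_one_of_one_lt₀ (Nat.one_lt_cast.2 h.two_le))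
  have hpow : t ^ (l + 1) ≤ |x - y| ^ α :=
    calc t ^ (l + 1) = ((M : ℝ)⁻¹ ^ (l + 1)) ^ α := by
          rw [htα, Real.rpow_neg hM.le, ← Real.inv_rpow hM.le,
            ← Real.rpow_natCast_mul (by positivity), ← Real.rpow_mul_natCast (by positivity),
            mul_comm]
      _ ≤ |x - y| ^ α := by gcongr
  have hB := three_le_bumpBound
  calc |deriv f x - deriv f y| ≤ 5 * bumpBound * t ^ l := by
        refine hf.abs_deriv_sub_deriv_le ht ?_
        rwa [inv_pow, ← one_div, le_div_iff₀ (by positivity)] at hl'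
    _ = 5 * bumpBound / t * t ^ (l + 1) := by field_simp; ring
    _ ≤ 5 * bumpBound / t * |x - y| ^ α := by gcongr

end ScaleApprox

/-- `N` points of spacing `η`, starting from `-W`. -/
noncomputable def grid (W η : ℝ) (N : ℕ) : Finset ℝ :=
  (Finset.range N).image fun k : ℕ ↦ -W + k * η

theorem card_grid_le (W η : ℝ) (N : ℕ) : #(grid W η N) ≤ N :=
  Finset.card_image_le.trans_eq (Finset.card_range N)

theorem exists_mem_grid_abs_sub_le {W η y : ℝ} {N : ℕ} (hη : 0 < η) (hN : 2 * W < N * η)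
    (hy : |y| ≤ W) : ∃ z ∈ grid W η N, |y - z| ≤ η := by
  obtain ⟨hyl, hyu⟩ := abs_le.1 hy
  have hle := Nat.floor_le (div_nonneg (by linarith : 0 ≤ y + W) hη.le)
  have hlt := Nat.lt_floor_add_one ((y + W) / η)
  have hfloor : ⌊(y + W) / η⌋₊ < N := by
    rw [Nat.floor_lt (div_nonneg (by linarith) hη.le), div_lt_iff₀ hη]
    linarith
  refine ⟨_, Finset.mem_image_of_mem _ (Finset.mem_range.2 hfloor), ?_⟩
  rw [le_div_iff₀ hη] at hle
  rw [div_lt_iff₀ hη] at hlt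
  exact abs_le.2 ⟨by linarith, by linarith⟩

/-- A net of lines with slopes and intercepts in `[-W, W]`, of mesh `(t / M) ^ n / 2`. -/
noncomputable def lineNet (M : ℕ) (t W : ℝ) (Q n : ℕ) : Finset (ℝ × ℝ) :=
  grid W ((t / M) ^ n / 2) (Q ^ (n + 1)) ×ˢ grid W ((t / M) ^ n / 2) (Q ^ (n + 1))

section LineNet

variable {M Q : ℕ} {t W : ℝ}

theorem card_lineNet_le (M : ℕ) (t W : ℝ) (Q n : ℕ) :
    #(lineNet M t W Q n) ≤ (Q ^ 2) ^ (n + 1) := by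
  rw [lineNet, Finset.card_product, pow_right_comm, sq]
  gcongr <;> exact card_grid_le _ _ _

theorem exists_mem_lineNet_abs_sub_le (h : Scales M t) (hW : 4 * W < Q) (hQ : M / t ≤ Q) (n : ℕ)
    {p : ℝ × ℝ} (hslope : |p.1| ≤ W) (hicept : |p.2| ≤ W) :
    ∃ q ∈ lineNet M t W Q n, |p.1 - q.1| ≤ (t / M) ^ n / 2 ∧ |p.2 - q.2| ≤ (t / M) ^ n / 2 := by
  have hr := h.ratio_pos
  have hη : 0 < (t / M) ^ n / 2 := by positivity
  have hN : 2 * W < (Q ^ (n + 1) : ℕ) * ((t / M) ^ n / 2) := by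
    have hone : 1 ≤ Q * (t / M) := by
      rwa [div_le_iff₀ h.pos, ← one_mul (M : ℝ), ← le_div_iff₀ (Nat.cast_pos.2 h.base_pos),
        mul_div_assoc] at hQ
    calc 2 * W < Q / 2 * 1 := by linarith
      _ ≤ Q / 2 * (Q * (t / M)) ^ n := by gcongr; exact one_le_pow₀ hone
      _ = (Q ^ (n + 1) : ℕ) * ((t / M) ^ n / 2) := by push_cast; ring
  obtain ⟨m, hm, hpm⟩ := exists_mem_grid_abs_sub_le hη hN hslope
  obtain ⟨b, hb, hpb⟩ := exists_mem_grid_abs_sub_le hη hN hicept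
  exact ⟨(m, b), Finset.mk_mem_product hm hb, hpm, hpb⟩

theorem log_card_lineNet_le {n : ℕ} (h : (lineNet M t W Q n).Nonempty) :
    Real.log (3 * (2 ^ (n + 1) * #(lineNet M t W Q n))) ≤ Real.log (6 * Q ^ 2) * (n + 1) := by
  have : (0 : ℝ) < #(lineNet M t W Q n) := Nat.cast_pos.2 (Finset.card_pos.2 h)
  calc Real.log (3 * (2 ^ (n + 1) * #(lineNet M t W Q n)))
      ≤ Real.log (3 ^ (n + 1) * (2 ^ (n + 1) * (Q ^ 2) ^ (n + 1))) := by
        gcongr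
        · exact le_self_pow₀ (by norm_num) n.succ_ne_zero
        · exact_mod_cast card_lineNet_le M t W Q n
    _ = Real.log (6 * Q ^ 2) * (n + 1) := by
        rw [← mul_pow, ← mul_pow, Real.log_pow, ← mul_assoc]
        push_cast
        norm_num [mul_comm]

theorem exists_card_nearCells_lineNet_le (h : Scales M t) (W : ℝ) :
    ∃ a : ℕ → ℕ → ℝ, ∃ K : ℝ, (∀ l i, |a l i| ≤ 1) ∧ 0 ≤ K ∧
      ∀ (n : ℕ) (p : ℝ × ℝ), |p.1| ≤ W → |p.2| ≤ W →
        ∃ q : ℝ × ℝ, |p.1 - q.1| ≤ (t / M) ^ n / 2 ∧ |p.2 - q.2| ≤ (t / M) ^ n / 2 ∧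
          ∀ l, (#(nearCells M t l (partialSum M t a l - line q)) : ℝ) ≤ K * (n + 1) := by
  obtain ⟨Q, hQ⟩ := exists_nat_gt (max (max (4 * W) (M / t)) 1)
  simp only [max_lt_iff] at hQ
  obtain ⟨a, ha, hnear⟩ := exists_card_nearCells_partialSum_le h (lineNet M t W Q)
  have hlog : 0 ≤ Real.log (6 * Q ^ 2) := Real.log_nonneg (by nlinarith [hQ.2])
  refine ⟨a, 2 * M * Real.log (6 * Q ^ 2), ha, by positivity, fun n p hslope hicept ↦ ?_⟩
  obtain ⟨q, hq, hq'⟩ := exists_mem_lineNet_abs_sub_le h hQ.1.1 hQ.1.2.le n hslope hicept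
  refine ⟨q, hq'.1, hq'.2, fun l ↦ (hnear n q hq l).trans ?_⟩
  rw [mul_assoc (2 * (M : ℝ)) (Real.log (6 * Q ^ 2))]
  exact mul_le_mul_of_nonneg_left (log_card_lineNet_le ⟨q, hq⟩) (by positivity)

end LineNet

/-- The points where `|g|` is at most three times the height of the perturbation of level `n`. -/
def smallSet (M : ℕ) (t : ℝ) (n : ℕ) (g : ℝ → ℝ) : Set ℝ := {x | |g x| ≤ 3 * (t / M) ^ n}

/-- The points of `smallSet M t n g` for which `l` is the first level on which the derivative of
`G l` violates the bound in the definition of `nearSet`. -/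
def firstSteepSet (M : ℕ) (t : ℝ) (n : ℕ) (G : ℕ → ℝ → ℝ) (g : ℝ → ℝ) (l : ℕ) : Set ℝ :=
  {x ∈ smallSet M t n g | (3 * bumpBound + 6) * t ^ l < |deriv (G l) x| ∧
    ∀ k < l, |deriv (G k) x| ≤ (3 * bumpBound + 6) * t ^ k}

theorem card_le_two_of_le_add_one {s : Finset ℕ} (hs : ∀ i ∈ s, ∀ j ∈ s, j ≤ i + 1) : #s ≤ 2 := by
  obtain rfl | hne := s.eq_empty_or_nonempty
  · simp
  calc #s ≤ #(Finset.Icc (s.min' hne) (s.min' hne + 1)) :=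
        Finset.card_le_card fun j hj ↦ Finset.mem_Icc.2
          ⟨s.min'_le j hj, hs _ (s.min'_mem hne) j hj⟩
    _ = 2 := by rw [Nat.card_Icc]; omega

theorem exists_deriv_mul_eq_sub {g : ℝ → ℝ} (hg : Differentiable ℝ g) (x y : ℝ) :
    ∃ z ∈ uIcc x y, deriv g z * (y - x) = g y - g x := by
  obtain ⟨z, hz, hzg⟩ := domain_mvt (fun z _ ↦ (hg z).hasFDerivAt.hasFDerivWithinAt)
    (convex_segment (𝕜 := ℝ) x y) (left_mem_segment ℝ x y) (right_mem_segment ℝ x y)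
  refine ⟨z, segment_eq_uIcc x y ▸ hz, ?_⟩
  rw [hzg, fderiv_eq_smul_deriv, smul_eq_mul, mul_comm]

namespace ScaleApprox

variable {M : ℕ} {t X : ℝ} {G : ℕ → ℝ → ℝ} {g : ℝ → ℝ} {l n : ℕ} {x y : ℝ}

theorem mem_nearSet (h : Scales M t) (hg : ScaleApprox M t G g) (hl : l ≤ n)
    (hx : x ∈ smallSet M t n g) (hder : |deriv (G l) x| ≤ (3 * bumpBound + 6) * t ^ l) :
    x ∈ nearSet M t l (G l) := by
  refine ⟨?_, hder⟩
  have hpow : (t / M) ^ n ≤ (t / M) ^ l :=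
    pow_le_pow_of_le_one h.ratio_pos.le (h.ratio_le_half.trans (by norm_num)) hl
  have happ := hg.abs_sub_le l x
  calc |G l x| = |g x - (g x - G l x)| := by rw [sub_sub_cancel]
    _ ≤ |g x| + |g x - G l x| := abs_sub _ _
    _ ≤ 3 * (t / M) ^ l + 2 * bumpBound * (t / M) ^ l :=
        add_le_add (hx.trans (by gcongr)) happ
    _ = (2 * bumpBound + 3) * (t / M) ^ l := by ring

theorem lt_abs_deriv_of_steep (hg : ScaleApprox M t G g) (ht : 0 < t) {z : ℝ}
    (hsteep : (3 * bumpBound + 6) * t ^ l < |deriv (G l) x|) (hxz : |x - z| * M ^ l ≤ 1) :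
    6 * t ^ l < |deriv g z| := by
  have hB := three_le_bumpBound
  have hG : |deriv (G l) x - deriv (G l) z| ≤ bumpBound * t ^ l :=
    calc |deriv (G l) x - deriv (G l) z| ≤ bumpBound * (t * M) ^ l * |x - z| :=
          (hg.lipDeriv l).abs_deriv_sub_le x z
      _ = bumpBound * t ^ l * (|x - z| * M ^ l) := by rw [mul_pow]; ring
      _ ≤ bumpBound * t ^ l := mul_le_of_le_one_right (by positivity) hxz
  have happ := hg.abs_deriv_sub_le l z
  have htri : |deriv (G l) x| ≤
      |deriv (G l) x - deriv (G l) z| + |deriv g z - deriv (G l) z| + |deriv g z| := by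
    calc |deriv (G l) x|
        = |(deriv (G l) x - deriv (G l) z) - (deriv g z - deriv (G l) z) + deriv g z| := by ring_nf
      _ ≤ _ := (abs_add_le _ _).trans (add_le_add (abs_sub _ _) le_rfl)
  linarith

theorem abs_sub_mul_pow_le_one_of_steep (h : Scales M t) (hg : ScaleApprox M t G g) (hl : l ≤ n)
    (hx : x ∈ smallSet M t n g) (hy : y ∈ smallSet M t n g) (hxy : |x - y| * M ^ l ≤ 1)
    (hsteep : (3 * bumpBound + 6) * t ^ l < |deriv (G l) x|) : |x - y| * M ^ n ≤ 1 := by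
  have ht := h.pos
  have hM : (0 : ℝ) < M := Nat.cast_pos.2 h.base_pos
  obtain ⟨z, hz, hzg⟩ := exists_deriv_mul_eq_sub hg.differentiable x y
  have hzx : |x - z| ≤ |x - y| := by
    rw [abs_sub_comm x z, abs_sub_comm x y]
    exact abs_sub_left_of_mem_uIcc hz
  have hxz : |x - z| * M ^ l ≤ 1 :=
    (mul_le_mul_of_nonneg_right hzx (by positivity)).trans hxy
  have hpow : t ^ n ≤ t ^ l := pow_le_pow_of_le_one ht.le (h.le_half.trans (by norm_num)) hl
  have hprod : 6 * t ^ n * |x - y| ≤ 6 * (t / M) ^ n :=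
    calc 6 * t ^ n * |x - y| ≤ |deriv g z| * |x - y| := by
          gcongr
          linarith [hg.lt_abs_deriv_of_steep ht hsteep hxz]
      _ = |g y - g x| := by rw [abs_sub_comm x y, ← abs_mul, hzg]
      _ ≤ |g y| + |g x| := abs_sub _ _
      _ ≤ 3 * (t / M) ^ n + 3 * (t / M) ^ n := add_le_add hy hx
      _ = 6 * (t / M) ^ n := by ring
  rw [div_pow, mul_div_assoc', le_div_iff₀ (by positivity), mul_assoc] at hprod
  exact le_of_mul_le_mul_left (hprod.trans_eq (mul_one _).symm) (by positivity)

theorem card_cells_firstSteepSet_le_two_mul (h : Scales M t) (hg : ScaleApprox M t G g)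
    (hl : l ≤ n) :
    #(cells M n (firstSteepSet M t n G g l)) ≤ 2 * #(cells M l (firstSteepSet M t n G g l)) := by
  obtain ⟨k, rfl⟩ := Nat.exists_eq_add_of_le hl
  refine Finset.card_le_mul_card_image_of_maps_to (f := fun j ↦ j / M ^ k) (fun j hj ↦ ?_) _
    fun i _ ↦ card_le_two_of_le_add_one fun j hj j' hj' ↦ ?_
  · obtain ⟨x, hx, rfl⟩ := mem_cells.1 hj
    exact cellIndex_eq_div h.base_pos k ▸ cellIndex_mem_cells hx.1 hx.2
  · obtain ⟨hj, hji⟩ := Finset.mem_filter.1 hj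
    obtain ⟨hj', hji'⟩ := Finset.mem_filter.1 hj'
    obtain ⟨x, ⟨hx, hx'⟩, rfl⟩ := mem_cells.1 hj
    obtain ⟨y, ⟨hy, hy'⟩, rfl⟩ := mem_cells.1 hj'
    rw [← cellIndex_eq_div h.base_pos] at hji hji'
    exact cellIndex_le_add_one hx'.1 <| hg.abs_sub_mul_pow_le_one_of_steep h hl hx.1 hy.1
      (abs_sub_mul_pow_le_one hx'.1 hy'.1 (hji.trans hji'.symm)) hx.2.1

theorem card_cells_firstSteepSet_le (h : Scales M t) (hg : ScaleApprox M t G g)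
    (hX : ∀ l, (#(nearCells M t l (G l)) : ℝ) ≤ X) (hl : l ≤ n) :
    (#(cells M l (firstSteepSet M t n G g l)) : ℝ) ≤ M * (X + 2) := by
  have hM : (1 : ℝ) ≤ M := Nat.one_le_cast.2 h.base_pos
  have hX₀ : 0 ≤ X := (Nat.cast_nonneg _).trans (hX 0)
  obtain _ | l := l
  · calc (#(cells M 0 (firstSteepSet M t n G g 0)) : ℝ) ≤ 1 * 2 := by
          exact_mod_cast card_cells_le M 0 _
      _ ≤ M * (X + 2) := by gcongr; linarith
  · have hnear : firstSteepSet M t n G g (l + 1) ∩ Icc 0 1 ⊆ nearSet M t l (G l) := fun x hx ↦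
      hg.mem_nearSet h (l.le_succ.trans hl) hx.1.1 (hx.1.2.2 l l.lt_succ_self)
    calc (#(cells M (l + 1) (firstSteepSet M t n G g (l + 1))) : ℝ)
        ≤ M * #(cells M l (firstSteepSet M t n G g (l + 1))) := by
          exact_mod_cast pow_one M ▸ card_cells_add_le h.base_pos l 1 _
      _ ≤ M * #(nearCells M t l (G l)) := by
          gcongr
          exact cells_mono hnear
      _ ≤ M * (X + 2) := by gcongr; linarith [hX l]

theorem cells_smallSet_subset (h : Scales M t) (hg : ScaleApprox M t G g) (n : ℕ) :
    cells M n (smallSet M t n g) ⊆ nearCells M t n (G n) ∪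
      (Finset.range (n + 1)).biUnion fun l ↦ cells M n (firstSteepSet M t n G g l) := by
  classical
  intro j hj
  obtain ⟨x, ⟨hx, hx'⟩, rfl⟩ := mem_cells.1 hj
  rw [Finset.mem_union, Finset.mem_biUnion]
  by_cases hex : ∃ l, l ≤ n ∧ (3 * bumpBound + 6) * t ^ l < |deriv (G l) x|
  · obtain ⟨hln, hsteep⟩ := Nat.find_spec hex
    refine .inr ⟨Nat.find hex, Finset.mem_range.2 (Nat.lt_succ_of_le hln),
      cellIndex_mem_cells ⟨hx, hsteep, fun k hk ↦ ?_⟩ hx'⟩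
    exact not_lt.1 fun hk' ↦ Nat.find_min hex hk ⟨hk.le.trans hln, hk'⟩
  · push Not at hex
    exact .inl (cellIndex_mem_cells (hg.mem_nearSet h le_rfl hx (hex n le_rfl)) hx')

theorem card_cells_smallSet_le (h : Scales M t) (hg : ScaleApprox M t G g)
    (hX : ∀ l, (#(nearCells M t l (G l)) : ℝ) ≤ X) (n : ℕ) :
    (#(cells M n (smallSet M t n g)) : ℝ) ≤ X + (n + 1) * (2 * (M * (X + 2))) := by
  have hsteep : ∀ l ∈ Finset.range (n + 1),
      (#(cells M n (firstSteepSet M t n G g l)) : ℝ) ≤ 2 * (M * (X + 2)) := fun l hl ↦ by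
    have hln := Nat.lt_succ_iff.1 (Finset.mem_range.1 hl)
    calc (#(cells M n (firstSteepSet M t n G g l)) : ℝ)
        ≤ 2 * #(cells M l (firstSteepSet M t n G g l)) := by
          exact_mod_cast hg.card_cells_firstSteepSet_le_two_mul h hln
      _ ≤ 2 * (M * (X + 2)) := by
          gcongr
          exact hg.card_cells_firstSteepSet_le h hX hln
  calc (#(cells M n (smallSet M t n g)) : ℝ)
      ≤ #(nearCells M t n (G n)) +
          ∑ l ∈ Finset.range (n + 1), (#(cells M n (firstSteepSet M t n G g l)) : ℝ) := by
        exact_mod_cast (Finset.card_le_card (hg.cells_smallSet_subset h n)).trans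
          ((Finset.card_union_le _ _).trans (by gcongr; exact Finset.card_biUnion_le))
    _ ≤ X + (n + 1) * (2 * (M * (X + 2))) := by
        refine add_le_add (hX n) ((Finset.sum_le_card_nsmul _ _ _ hsteep).trans_eq ?_)
        rw [Finset.card_range, nsmul_eq_mul]
        push_cast
        rfl

end ScaleApprox

/-- At every level `n`, the cells on which `f` comes close to a line of slope at most `Λ` number at
most `C * (n + 1) ^ 2`. -/
def HasFewCellsNearLines (M : ℕ) (t Λ C : ℝ) (f : ℝ → ℝ) : Prop :=
  ∀ (n : ℕ) (p : ℝ × ℝ), |p.1| ≤ Λ →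
    (#(cells M n {x | |f x - line p x| ≤ 2 * (t / M) ^ n}) : ℝ) ≤ C * (n + 1) ^ 2

section HasFewCellsNearLines

variable {M : ℕ} {t Λ C : ℝ} {f : ℝ → ℝ}

theorem HasFewCellsNearLines.neg (hf : HasFewCellsNearLines M t Λ C f) :
    HasFewCellsNearLines M t Λ C (-f) := by
  intro n p hp
  convert hf n (-p) (by simpa using hp) using 6 with x
  rw [← abs_neg]
  simp only [line, Pi.neg_apply, Prod.fst_neg, Prod.snd_neg]
  ring_nf

theorem abs_snd_le_of_abs_sub_line_le {c r x : ℝ} {p : ℝ × ℝ} (hx : x ∈ Icc (0 : ℝ) 1)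
    (hf : |f x| ≤ c) (hp : |p.1| ≤ Λ) (h : |f x - line p x| ≤ r) : |p.2| ≤ c + r + Λ := by
  have hpx : |p.1 * x| ≤ Λ := by
    rw [abs_mul, abs_of_nonneg hx.1]
    exact (mul_le_of_le_one_right (abs_nonneg _) hx.2).trans hp
  calc |p.2| = |f x - (f x - line p x) - p.1 * x| := by rw [line]; ring_nf
    _ ≤ c + r + Λ := (abs_sub _ _).trans (add_le_add ((abs_sub _ _).trans (add_le_add hf h)) hpx)

theorem abs_line_sub_line_le {r x : ℝ} {p q : ℝ × ℝ} (hx : x ∈ Icc (0 : ℝ) 1)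
    (hslope : |p.1 - q.1| ≤ r / 2) (hicept : |p.2 - q.2| ≤ r / 2) :
    |line p x - line q x| ≤ r := by
  have hpx : |(p.1 - q.1) * x| ≤ r / 2 := by
    rw [abs_mul, abs_of_nonneg hx.1]
    exact (mul_le_of_le_one_right (abs_nonneg _) hx.2).trans hslope
  calc |line p x - line q x| = |(p.1 - q.1) * x + (p.2 - q.2)| := by simp only [line]; ring_nf
    _ ≤ r / 2 + r / 2 := (abs_add_le _ _).trans (add_le_add hpx hicept)
    _ = r := by ring

theorem exists_hasFewCellsNearLines_bumpSeries (h : Scales M t) :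
    ∃ (a : ℕ → ℕ → ℝ) (C : ℝ), (∀ l i, |a l i| ≤ 1) ∧ 0 ≤ C ∧
      HasFewCellsNearLines M t (2 * bumpBound) C (bumpSeries M t a) := by
  obtain ⟨a, K, ha, hK, hnet⟩ := exists_card_nearCells_lineNet_le h (4 * bumpBound + 2)
  refine ⟨a, K + 2 * (M * (K + 2)), ha, by positivity, fun n p hp ↦ ?_⟩
  set near := {x | |bumpSeries M t a x - line p x| ≤ 2 * (t / M) ^ n}
  obtain hempty | ⟨j, hj⟩ := (cells M n near).eq_empty_or_nonempty
  · rw [hempty, Finset.card_empty, Nat.cast_zero]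
    positivity
  have hB := three_le_bumpBound
  have hpow : (t / M) ^ n ≤ 1 :=
    pow_le_one₀ h.ratio_pos.le (h.ratio_le_half.trans (by norm_num))
  have hicept : |p.2| ≤ 4 * bumpBound + 2 := by
    obtain ⟨x, ⟨hx, hx'⟩, -⟩ := mem_cells.1 hj
    linarith [abs_snd_le_of_abs_sub_line_le hx' (abs_bumpSeries_le h ha x) hp hx]
  obtain ⟨q, hslope_sub, hicept_sub, hq⟩ := hnet n p (by linarith) hicept
  have hsub : near ∩ Icc 0 1 ⊆ smallSet M t n (bumpSeries M t a - line q) := fun x ⟨hx, hx'⟩ ↦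
    calc |bumpSeries M t a x - line q x|
        = |(bumpSeries M t a x - line p x) + (line p x - line q x)| := by ring_nf
      _ ≤ 2 * (t / M) ^ n + (t / M) ^ n := (abs_add_le _ _).trans
          (add_le_add hx (abs_line_sub_line_le hx' hslope_sub hicept_sub))
      _ = 3 * (t / M) ^ n := by ring
  calc (#(cells M n near) : ℝ)
      ≤ #(cells M n (smallSet M t n (bumpSeries M t a - line q))) := by
        gcongr
        exact cells_mono hsub
    _ ≤ K * (n + 1) + (n + 1) * (2 * (M * (K * (n + 1) + 2))) :=
        ((scaleApprox_bumpSeries h ha).sub_line q).card_cells_smallSet_le h hq n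
    _ ≤ K * (n + 1) ^ 2 + (n + 1) * (2 * (M * (K * (n + 1) + 2 * (n + 1)))) := by
        gcongr
        · exact le_self_pow₀ (by linarith [Nat.cast_nonneg (α := ℝ) n]) two_ne_zero
        · linarith [Nat.cast_nonneg (α := ℝ) n]
    _ = (K + 2 * (M * (K + 2))) * (n + 1) ^ 2 := by ring

end HasFewCellsNearLines

/-- The slopes of the chords of `f` between points of `S`. -/
def chordSlopes (f : ℝ → ℝ) (S : Set ℝ) : Set ℝ := {s | ∃ x ∈ S, ∃ y ∈ S, x < y ∧ slope f x y = s}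

/-- Adjacent chords of `f` between points of `A` have increasing slopes. -/
def ChordSlopesMono (f : ℝ → ℝ) (A : Set ℝ) : Prop :=
  ∀ ⦃x⦄, x ∈ A → ∀ ⦃y⦄, y ∈ A → ∀ ⦃z⦄, z ∈ A → x < y → y < z → slope f x y ≤ slope f y z

/-- The points of `A ∩ [0, 1]` in the cell of index `i` of level `l`. -/
def cellPiece (M l : ℕ) (A : Set ℝ) (i : ℕ) : Set ℝ := {x ∈ A ∩ Icc 0 1 | cellIndex M l x = i}

theorem ChordSlopesMono.of_convexRestr {f : ℝ → ℝ} {A : Set ℝ} (h : ConvexRestr f A) :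
    ChordSlopesMono f A := by
  obtain ⟨k, hk, hfk⟩ := h
  intro x hx y hy z hz hxy hyz
  rw [slope_def_field, slope_def_field, hfk hx, hfk hy, hfk hz]
  exact hk.slope_mono_adjacent (subset_convexHull ℝ A hx) (subset_convexHull ℝ A hz) hxy hyz

theorem ChordSlopesMono.neg_of_concaveRestr {f : ℝ → ℝ} {A : Set ℝ} (h : ConcaveRestr f A) :
    ChordSlopesMono (-f) A :=
  let ⟨k, hk, hfk⟩ := h
  .of_convexRestr ⟨-k, hk.neg, fun _ hx ↦ congrArg Neg.neg (hfk hx)⟩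

section ChordSlopes

variable {f : ℝ → ℝ} {A S : Set ℝ} {Λ : NNReal} {δ s s' : ℝ}

theorem abs_le_of_mem_chordSlopes (hf : LipschitzWith Λ f) (hs : s ∈ chordSlopes f S) :
    |s| ≤ Λ := by
  obtain ⟨x, -, y, -, hxy, rfl⟩ := hs
  rw [slope_def_field, abs_div, div_le_iff₀ (abs_pos.2 (sub_ne_zero.2 hxy.ne'))]
  exact hf.dist_le_mul y x

theorem slope_mem_chordSlopes {x y : ℝ} (hx : x ∈ S) (hy : y ∈ S) (hxy : x ≠ y) :
    slope f x y ∈ chordSlopes f S := by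
  obtain h | h := hxy.lt_or_gt
  · exact ⟨x, hx, y, hy, h, rfl⟩
  · exact ⟨y, hy, x, hx, h, slope_comm f y x⟩

theorem ChordSlopesMono.le_of_mem_cellPiece {M l i j : ℕ} (hA : ChordSlopesMono f A) (hij : i < j)
    (hs : s ∈ chordSlopes f (cellPiece M l A i)) (hs' : s' ∈ chordSlopes f (cellPiece M l A j)) :
    s ≤ s' := by
  obtain ⟨x, ⟨hx, -⟩, y, ⟨hy, rfl⟩, hxy, rfl⟩ := hs
  obtain ⟨z, ⟨hz, rfl⟩, w, ⟨hw, -⟩, hzw, rfl⟩ := hs'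
  have hyz : y < z := lt_of_cellIndex_lt hij
  exact (hA hx.1 hy.1 hz.1 hxy hyz).trans (hA hy.1 hz.1 hw.1 hyz hzw)

theorem exists_line_of_chordSlopes_close (hf : LipschitzWith Λ f)
    (hS : ∀ s ∈ chordSlopes f S, ∀ s' ∈ chordSlopes f S, s ≤ s' + δ) {x₀ : ℝ} (hx₀ : x₀ ∈ S) :
    ∃ p : ℝ × ℝ, |p.1| ≤ Λ ∧ ∀ x ∈ S, |f x - line p x| ≤ δ * |x - x₀| := by
  obtain ⟨m, hm, hmS⟩ : ∃ m : ℝ, |m| ≤ Λ ∧ ∀ s ∈ chordSlopes f S, |s - m| ≤ δ := by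
    obtain hempty | ⟨m, hm⟩ := (chordSlopes f S).eq_empty_or_nonempty
    · exact ⟨0, by simp, by simp [hempty]⟩
    · exact ⟨m, abs_le_of_mem_chordSlopes hf hm, fun s hs ↦
        abs_sub_le_iff.2 ⟨by linarith [hS s hs m hm], by linarith [hS m hm s hs]⟩⟩
  refine ⟨(m, f x₀ - m * x₀), hm, fun x hx ↦ ?_⟩
  obtain rfl | hne := eq_or_ne x₀ x
  · simp [line]
  have hslope : slope f x₀ x * (x - x₀) = f x - f x₀ := by
    rw [mul_comm]
    exact sub_smul_slope f x₀ x
  calc |f x - line (m, f x₀ - m * x₀) x| = |slope f x₀ x - m| * |x - x₀| := by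
        rw [← abs_mul, sub_mul, hslope, line]
        ring_nf
    _ ≤ δ * |x - x₀| := by
        gcongr
        exact hmS _ (slope_mem_chordSlopes hx₀ hx hne)

theorem card_le_of_add_le {I : Finset ℕ} {v : ℕ → ℝ} {Λ : ℝ} (hδ : 0 < δ) (hΛ : 0 ≤ Λ)
    (hv : ∀ i ∈ I, |v i| ≤ Λ) (hsep : ∀ i ∈ I, ∀ j ∈ I, i < j → v i + δ ≤ v j) :
    (#I : ℝ) ≤ 2 * Λ / δ + 1 := by
  have hfloor : ∀ i ∈ I, ∀ j ∈ I, i < j → ⌊(v i + Λ) / δ⌋₊ < ⌊(v j + Λ) / δ⌋₊ := by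
    intro i hi j hj hij
    have hi₀ : 0 ≤ (v i + Λ) / δ := div_nonneg (by linarith [(abs_le.1 (hv i hi)).1]) hδ.le
    rw [← Nat.add_one_le_iff, ← Nat.floor_add_one hi₀, div_add_one hδ.ne']
    exact Nat.floor_mono (div_le_div_of_nonneg_right (by linarith [hsep i hi j hj hij]) hδ.le)
  have hcard : #I ≤ #(Finset.range (⌊2 * Λ / δ⌋₊ + 1)) := by
    refine Finset.card_le_card_of_injOn (fun i ↦ ⌊(v i + Λ) / δ⌋₊) (fun i hi ↦ ?_)
      fun i hi j hj hij ↦ ?_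
    · refine Finset.mem_coe.2 (Finset.mem_range.2 (Nat.lt_succ_of_le (Nat.floor_mono ?_)))
      gcongr
      linarith [(abs_le.1 (hv i hi)).2]
    · by_contra! hne
      obtain h | h := hne.lt_or_gt
      exacts [(hfloor i hi j hj h).ne hij, (hfloor j hj i hi h).ne' hij]
  rw [Finset.card_range] at hcard
  calc (#I : ℝ) ≤ ⌊2 * Λ / δ⌋₊ + 1 := by exact_mod_cast hcard
    _ ≤ 2 * Λ / δ + 1 := by gcongr; exact Nat.floor_le (by positivity)

/-- Some two chords of `f` between points of `S` have slopes more than `δ` apart. -/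
def IsBent (δ : ℝ) (f : ℝ → ℝ) (S : Set ℝ) : Prop :=
  ∃ s ∈ chordSlopes f S, ∃ s' ∈ chordSlopes f S, s + δ < s'

theorem ChordSlopesMono.card_isBent_le (hA : ChordSlopesMono f A) (hf : LipschitzWith Λ f)
    (hδ : 0 < δ) (M l : ℕ) (I : Finset ℕ) [DecidablePred fun i ↦ IsBent δ f (cellPiece M l A i)] :
    (#{i ∈ I | IsBent δ f (cellPiece M l A i)} : ℝ) ≤ 2 * Λ / δ + 1 := by
  have hbent (i : ℕ) : ∃ s, IsBent δ f (cellPiece M l A i) →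
      s ∈ chordSlopes f (cellPiece M l A i) ∧
        ∃ s' ∈ chordSlopes f (cellPiece M l A i), s + δ < s' := by
    by_cases h : IsBent δ f (cellPiece M l A i)
    · obtain ⟨s, hs⟩ := h
      exact ⟨s, fun _ ↦ hs⟩
    · exact ⟨0, fun h' ↦ (h h').elim⟩
  choose v hv using hbent
  refine card_le_of_add_le (v := v) hδ Λ.2 (fun i hi ↦ ?_) fun i hi j hj hij ↦ ?_
  · exact abs_le_of_mem_chordSlopes hf (hv i (Finset.mem_filter.1 hi).2).1
  · obtain ⟨-, s', hs', hlt⟩ := hv i (Finset.mem_filter.1 hi).2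
    exact hlt.le.trans (hA.le_of_mem_cellPiece hij hs' (hv j (Finset.mem_filter.1 hj).2).1)

end ChordSlopes

section CellPiece

variable {M : ℕ}

theorem card_cells_add_le_sum_cellPiece (l k : ℕ) (A : Set ℝ) :
    #(cells M (l + k) A) ≤ ∑ i ∈ cells M l A, #(cells M (l + k) (cellPiece M l A i)) := by
  classical
  refine (Finset.card_le_card fun j hj ↦ ?_).trans Finset.card_biUnion_le
  obtain ⟨x, hx, rfl⟩ := mem_cells.1 hj
  exact Finset.mem_biUnion.2 ⟨_, cellIndex_mem_cells hx.1 hx.2,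
    cellIndex_mem_cells ⟨hx, rfl⟩ hx.2⟩

theorem card_cells_cellPiece_le (hM : 0 < M) (l k : ℕ) (A : Set ℝ) (i : ℕ) :
    #(cells M (l + k) (cellPiece M l A i)) ≤ M ^ k := by
  have hone : cells M l (cellPiece M l A i) ⊆ {i} := fun j hj ↦ by
    obtain ⟨x, hx, rfl⟩ := mem_cells.1 hj
    exact Finset.mem_singleton.2 hx.1.2
  calc #(cells M (l + k) (cellPiece M l A i)) ≤ M ^ k * #(cells M l (cellPiece M l A i)) :=
        card_cells_add_le hM l k _
    _ ≤ M ^ k * 1 := by gcongr; exact Finset.card_le_card hone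
    _ = M ^ k := mul_one _

end CellPiece

section Recursion

variable {M : ℕ} {t C : ℝ} {Λ : NNReal} {f : ℝ → ℝ} {A : Set ℝ}

theorem HasFewCellsNearLines.card_cells_cellPiece_le (hP : HasFewCellsNearLines M t Λ C f)
    (hf : LipschitzWith Λ f) (hM : 0 < M) (ht : 0 < t) {l k i : ℕ} (hi : i ∈ cells M l A)
    (hbent : ¬ IsBent (2 * (t ^ (l + k) / M ^ k)) f (cellPiece M l A i)) :
    (#(cells M (l + k) (cellPiece M l A i)) : ℝ) ≤ C * ((l + k : ℕ) + 1) ^ 2 := by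
  obtain ⟨x₀, hx₀, hx₀i⟩ := mem_cells.1 hi
  obtain ⟨p, hp, hfp⟩ := exists_line_of_chordSlopes_close hf
    (fun s hs s' hs' ↦ not_lt.1 fun hlt ↦ hbent ⟨s', hs', s, hs, hlt⟩)
    (show x₀ ∈ cellPiece M l A i from ⟨hx₀, hx₀i⟩)
  refine le_trans ?_ (hP (l + k) p hp)
  gcongr
  refine cells_mono fun x ⟨hx, _⟩ ↦ (hfp x hx).trans ?_
  have : (0 : ℝ) < M := Nat.cast_pos.2 hM
  have hcell : |x - x₀| * M ^ l ≤ 1 :=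
    abs_sub_mul_pow_le_one hx.1.2.1 hx₀.2.1 (hx.2.trans hx₀i.symm)
  calc 2 * (t ^ (l + k) / M ^ k) * |x - x₀|
      = 2 * (t / M) ^ (l + k) * (|x - x₀| * M ^ l) := by
        rw [div_pow, pow_add (M : ℝ)]
        field_simp
    _ ≤ 2 * (t / M) ^ (l + k) := mul_le_of_le_one_right (by positivity) hcell

theorem ChordSlopesMono.card_isBent_scaled_le (hA : ChordSlopesMono f A) (hf : LipschitzWith Λ f)
    (hM : 0 < M) (ht : 0 < t) (ht' : t ≤ 1) (l k : ℕ) (I : Finset ℕ) [DecidablePred fun i ↦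
      IsBent (2 * (t ^ (l + k) / M ^ k)) f (cellPiece M l A i)] :
    (#{i ∈ I | IsBent (2 * (t ^ (l + k) / M ^ k)) f (cellPiece M l A i)} : ℝ) ≤
      (Λ + 1) * (M ^ k * t⁻¹ ^ (l + k)) := by
  have hM' : (1 : ℝ) ≤ M := Nat.one_le_cast.2 hM
  have hone : 1 ≤ (M : ℝ) ^ k * t⁻¹ ^ (l + k) :=
    one_le_mul_of_one_le_of_one_le (one_le_pow₀ hM') (one_le_pow₀ ((one_le_inv₀ ht).2 ht'))
  calc _ ≤ 2 * Λ / (2 * (t ^ (l + k) / M ^ k)) + 1 :=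
        hA.card_isBent_le hf (by positivity) M l I
    _ ≤ Λ * (M ^ k * t⁻¹ ^ (l + k)) + M ^ k * t⁻¹ ^ (l + k) := by
        gcongr
        rw [inv_pow]
        field_simp
        rfl
    _ = (Λ + 1) * (M ^ k * t⁻¹ ^ (l + k)) := by ring

theorem HasFewCellsNearLines.card_cells_add_le (hP : HasFewCellsNearLines M t Λ C f)
    (hA : ChordSlopesMono f A) (hf : LipschitzWith Λ f) (hM : 0 < M) (ht : 0 < t) (ht' : t ≤ 1)
    (hC : 0 ≤ C) (l k : ℕ) :
    (#(cells M (l + k) A) : ℝ) ≤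
      (Λ + 1) * ((M : ℝ) ^ (2 * k) * t⁻¹ ^ (l + k)) +
        C * ((l + k : ℕ) + 1) ^ 2 * #(cells M l A) := by
  classical
  set δ : ℝ := 2 * (t ^ (l + k) / M ^ k)
  calc (#(cells M (l + k) A) : ℝ)
      ≤ ∑ i ∈ cells M l A, (#(cells M (l + k) (cellPiece M l A i)) : ℝ) := by
        exact_mod_cast card_cells_add_le_sum_cellPiece l k A
    _ ≤ ∑ i ∈ cells M l A,
        ((if IsBent δ f (cellPiece M l A i) then (M : ℝ) ^ k else 0) +
          C * ((l + k : ℕ) + 1) ^ 2) := by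
        refine Finset.sum_le_sum fun i hi ↦ ?_
        split_ifs with h
        · exact le_add_of_le_of_nonneg
            (by exact_mod_cast ConvexRestriction.card_cells_cellPiece_le hM l k A i)
            (by positivity)
        · rw [zero_add]
          exact hP.card_cells_cellPiece_le hf hM ht hi h
    _ = #{i ∈ cells M l A | IsBent δ f (cellPiece M l A i)} * (M : ℝ) ^ k +
          C * ((l + k : ℕ) + 1) ^ 2 * #(cells M l A) := by
        rw [Finset.sum_add_distrib, ← Finset.sum_filter, Finset.sum_const, Finset.sum_const,
          nsmul_eq_mul, nsmul_eq_mul, mul_comm (#(cells M l A) : ℝ)]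
    _ ≤ (Λ + 1) * (M ^ k * t⁻¹ ^ (l + k)) * M ^ k +
          C * ((l + k : ℕ) + 1) ^ 2 * #(cells M l A) := by
        gcongr
        exact hA.card_isBent_scaled_le hf hM ht ht' l k _
    _ = _ := by rw [two_mul k, pow_add (M : ℝ) k k]; ring

end Recursion

section Growth

variable {b α β R : ℝ}

theorem exists_forall_mul_sq_le_pow (hR : 1 < R) (c : ℝ) :
    ∃ k₀ : ℕ, ∀ k ≥ k₀, c * ((k : ℝ) + 1) ^ 2 ≤ R ^ k := by
  have hlim : Tendsto (fun k : ℕ ↦ c * R * (((k + 1 : ℕ) : ℝ) ^ 2 / R ^ (k + 1))) atTop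
      (nhds 0) := by
    simpa using ((tendsto_add_atTop_iff_nat 1).2
      (tendsto_pow_const_div_const_pow_of_one_lt 2 hR)).const_mul (c * R)
  obtain ⟨k₀, hk₀⟩ := eventually_atTop.1 (hlim.eventually_le_const one_pos)
  refine ⟨k₀, fun k hk ↦ ?_⟩
  have hRk : 0 < R ^ k := by positivity
  rw [← div_le_one hRk]
  refine le_trans (le_of_eq ?_) (hk₀ k hk)
  rw [pow_succ R]
  push_cast
  field_simp

theorem pow_mul_rpow_pow_le (hb : 1 ≤ b) {q k n : ℕ} (hq : 2 ≤ (β - α) * q) (hn : q * k ≤ n) :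
    b ^ (2 * k) * (b ^ α) ^ n ≤ (b ^ β) ^ n := by
  have hb₀ : 0 < b := by positivity
  have hαβ : 0 < β - α := pos_of_mul_pos_left (two_pos.trans_le hq) (Nat.cast_nonneg q)
  rw [← Real.rpow_natCast b, ← Real.rpow_mul_natCast hb₀.le, ← Real.rpow_mul_natCast hb₀.le,
    ← Real.rpow_add hb₀]
  refine Real.rpow_le_rpow_of_exponent_le hb ?_
  have hn' : (q : ℝ) * k ≤ n := by exact_mod_cast hn
  have : 2 * (k : ℝ) ≤ (β - α) * n :=
    calc 2 * (k : ℝ) ≤ (β - α) * q * k := by gcongr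
      _ = (β - α) * (q * k) := mul_assoc _ _ _
      _ ≤ (β - α) * n := by gcongr
  push_cast
  linarith

theorem exists_steps (hb : 1 < b) (hβ : 0 < β) (hαβ : α < β) {C : ℝ} (hC : 0 ≤ C) :
    ∃ n₀ : ℕ, ∀ n ≥ n₀, ∃ k, 0 < k ∧ k ≤ n ∧ b ^ (2 * k) * (b ^ α) ^ n ≤ (b ^ β) ^ n ∧
      C * ((n : ℝ) + 1) ^ 2 ≤ (b ^ β) ^ k / 2 := by
  obtain ⟨q, hq⟩ := exists_nat_ge (2 / (β - α))
  rw [div_le_iff₀' (sub_pos.2 hαβ)] at hq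
  have hq₀ : 0 < q := Nat.cast_pos.1 (pos_of_mul_pos_right (two_pos.trans_le hq) (sub_pos.2 hαβ).le)
  obtain ⟨k₀, hk₀⟩ := exists_forall_mul_sq_le_pow (Real.one_lt_rpow hb hβ) (2 * C * q ^ 2)
  refine ⟨q * (k₀ + 1), fun n hn ↦ ⟨n / q, ?_⟩⟩
  have hk : k₀ + 1 ≤ n / q := by rwa [Nat.le_div_iff_mul_le hq₀, mul_comm]
  refine ⟨by lia, Nat.div_le_self n q, pow_mul_rpow_pow_le hb.le hq (Nat.mul_div_le n q), ?_⟩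
  have hnq : (n : ℝ) + 1 ≤ q * ((n / q : ℕ) + 1) := by
    exact_mod_cast Nat.lt_mul_div_succ n hq₀
  calc C * ((n : ℝ) + 1) ^ 2 ≤ C * (q * ((n / q : ℕ) + 1)) ^ 2 := by gcongr
    _ = 2 * C * q ^ 2 * ((n / q : ℕ) + 1) ^ 2 / 2 := by ring
    _ ≤ (b ^ β) ^ (n / q) / 2 := by gcongr; exact hk₀ _ (by lia)

theorem exists_le_mul_rpow_pow_of_recursion (hb : 1 < b) (hβ : 0 < β) (hαβ : α < β) {K C : ℝ}
    (hK : 0 ≤ K) (hC : 0 ≤ C) {N : ℕ → ℝ}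
    (hN : ∀ l k, N (l + k) ≤
      K * (b ^ (2 * k) * (b ^ α) ^ (l + k)) + C * ((l + k : ℕ) + 1) ^ 2 * N l) :
    ∃ D, ∀ n, N n ≤ D * (b ^ β) ^ n := by
  obtain ⟨n₀, hn₀⟩ := exists_steps hb hβ hαβ hC
  have hR : 1 ≤ b ^ β := Real.one_le_rpow hb.le hβ.le
  set S := ∑ n ∈ Finset.range n₀, |N n|
  have hS : 0 ≤ S := Finset.sum_nonneg fun _ _ ↦ abs_nonneg _
  refine ⟨2 * K + S, fun n ↦ ?_⟩
  induction n using Nat.strong_induction_on with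
  | _ n ih =>
    obtain hn | hn := lt_or_ge n n₀
    · have hNS : N n ≤ S := (le_abs_self _).trans
        (Finset.single_le_sum (f := fun n ↦ |N n|) (fun _ _ ↦ abs_nonneg _)
          (Finset.mem_range.2 hn))
      calc N n ≤ 2 * K + S := by linarith
        _ ≤ (2 * K + S) * (b ^ β) ^ n := le_mul_of_one_le_right (by positivity) (one_le_pow₀ hR)
    · obtain ⟨k, hk, hkn, hpow, hsq⟩ := hn₀ n hn
      obtain ⟨l, rfl⟩ := Nat.exists_eq_add_of_le' hkn
      calc N (l + k)
          ≤ K * (b ^ (2 * k) * (b ^ α) ^ (l + k)) + C * ((l + k : ℕ) + 1) ^ 2 * N l := hN l k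
        _ ≤ K * (b ^ β) ^ (l + k) +
            C * ((l + k : ℕ) + 1) ^ 2 * ((2 * K + S) * (b ^ β) ^ l) := by
          gcongr
          exact ih l (by lia)
        _ ≤ K * (b ^ β) ^ (l + k) + (b ^ β) ^ k / 2 * ((2 * K + S) * (b ^ β) ^ l) := by gcongr
        _ = (2 * K + S / 2) * (b ^ β) ^ (l + k) := by rw [pow_add (b ^ β)]; ring
        _ ≤ (2 * K + S) * (b ^ β) ^ (l + k) := by gcongr; linarith

end Growth

section BoxDimension

variable {A : Set ℝ}

theorem gridCount_two_le (hA : A ⊆ Icc 0 1) (k : ℕ) : gridCount 2 k A ≤ 2 * #(cells 2 k A) := by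
  classical
  have hsub : {j : ℕ | 1 ≤ j ∧ j ≤ 2 ^ k ∧ (A ∩ Icc (((j : ℝ) - 1) / ((2 : ℕ) : ℝ) ^ k)
      ((j : ℝ) / ((2 : ℕ) : ℝ) ^ k)).Nonempty} ⊆
      (cells 2 k A ∪ (cells 2 k A).image (· + 1) : Finset ℕ) := by
    rintro j ⟨-, -, x, hxA, hxl, hxr⟩
    rw [div_le_iff₀ (by positivity)] at hxl
    rw [le_div_iff₀ (by positivity)] at hxr
    have hle : (cellIndex 2 k x : ℝ) ≤ j := (cellIndex_le (hA hxA).1).trans hxr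
    have hlt : (j : ℝ) < cellIndex 2 k x + 2 := by
      linarith [lt_cellIndex_add_one (M := 2) (l := k) (x := x)]
    have hmem : cellIndex 2 k x ∈ cells 2 k A := cellIndex_mem_cells hxA (hA hxA)
    norm_cast at hle hlt
    obtain rfl | rfl : j = cellIndex 2 k x ∨ j = cellIndex 2 k x + 1 := by lia
    exacts [Finset.mem_union_left _ hmem, Finset.mem_union_right _ (Finset.mem_image_of_mem _ hmem)]
  calc gridCount 2 k A ≤ #(cells 2 k A ∪ (cells 2 k A).image (· + 1)) := by
        rw [gridCount, ← ncard_coe_finset]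
        exact ncard_le_ncard hsub (Finset.finite_toSet _)
    _ ≤ #(cells 2 k A) + #(cells 2 k A) :=
        (Finset.card_union_le _ _).trans (add_le_add_right Finset.card_image_le _)
    _ = 2 * #(cells 2 k A) := (two_mul _).symm

theorem card_cells_le_card_cells_pow {M : ℕ} (hM : 0 < M) {Q n k : ℕ} (h : k ≤ Q * n) (A : Set ℝ) :
    #(cells M k A) ≤ #(cells (M ^ Q) n A) := by
  classical
  have hsub : cells M k A ⊆ (cells (M ^ Q) n A).image (· / M ^ (Q * n - k)) := fun i hi ↦ by
    obtain ⟨x, hx, rfl⟩ := mem_cells.1 hi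
    refine Finset.mem_image.2 ⟨_, cellIndex_mem_cells hx.1 hx.2, ?_⟩
    rw [cellIndex_eq_div hM (Q * n - k), Nat.add_sub_cancel' h]
    simp only [cellIndex, Nat.cast_pow, pow_mul]
  exact (Finset.card_le_card hsub).trans Finset.card_image_le

theorem ubDim_le_of_gridCount_le {C β : ℝ} (hβ : 0 ≤ β)
    (h : ∀ k, (gridCount 2 k A : ℝ) ≤ C * (2 ^ β) ^ k) : ubDim A ≤ β := by
  have hlog : 0 < Real.log 2 := Real.log_pos one_lt_two
  set c := Real.log (max C 1)
  have hc : 0 ≤ c := Real.log_nonneg (le_max_right _ _)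
  have hle (k : ℕ) : Real.log (gridCount 2 k A) ≤ c + β * (k * Real.log 2) := by
    obtain hzero | hpos := (gridCount 2 k A).eq_zero_or_pos
    · rw [hzero, Nat.cast_zero, Real.log_zero]
      positivity
    · have hlog := Real.log_le_log (Nat.cast_pos.2 hpos)
        ((h k).trans (mul_le_mul_of_nonneg_right (le_max_left C 1) (by positivity)))
      rw [Real.log_mul (by positivity) (by positivity), Real.log_pow,
        Real.log_rpow two_pos] at hlog
      linarith
  have hlim : Tendsto (fun k : ℕ ↦ c / (k * Real.log 2) + β) atTop (nhds β) := by
    simpa using ((tendsto_natCast_atTop_atTop.atTop_mul_const hlog).const_div_atTop c).add_const β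
  refine (limsup_le_limsup ?_ ?_ hlim.isBoundedUnder_le).trans_eq hlim.limsup_eq
  · filter_upwards [eventually_gt_atTop 0] with k hk
    have hk' : 0 < k * Real.log 2 := by positivity
    rw [div_le_iff₀ hk', add_mul, div_mul_cancel₀ _ hk'.ne']
    exact hle k
  · exact IsCoboundedUnder.of_frequently_ge (a := 0)
      (Frequently.of_forall fun k ↦ div_nonneg (Real.log_natCast_nonneg _) (by positivity))

theorem ubDim_le_of_card_cells_le {Q : ℕ} (hQ : 0 < Q) {D β : ℝ} (hβ : 0 ≤ β) (hA : A ⊆ Icc 0 1)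
    (h : ∀ n, (#(cells (2 ^ Q) n A) : ℝ) ≤ D * (((2 ^ Q : ℕ) : ℝ) ^ β) ^ n) : ubDim A ≤ β := by
  have hD : 0 ≤ D := by simpa using (Nat.cast_nonneg _).trans (h 0)
  have hpow : ((2 ^ Q : ℕ) : ℝ) ^ β = (2 ^ β) ^ Q := by
    rw [Nat.cast_pow, Nat.cast_ofNat, Real.rpow_pow_comm two_pos.le]
  have hone : (1 : ℝ) ≤ 2 ^ β := Real.one_le_rpow one_le_two hβ
  refine ubDim_le_of_gridCount_le (C := 2 * D * (2 ^ β) ^ Q) hβ fun k ↦ ?_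
  have hk : k ≤ Q * (k / Q + 1) := (Nat.lt_mul_div_succ k hQ).le
  calc (gridCount 2 k A : ℝ) ≤ 2 * #(cells (2 ^ Q) (k / Q + 1) A) := by
        exact_mod_cast (gridCount_two_le hA k).trans
          (Nat.mul_le_mul_left 2 (card_cells_le_card_cells_pow two_pos hk A))
    _ ≤ 2 * (D * ((2 ^ β) ^ Q) ^ (k / Q + 1)) := by
        rw [← hpow]
        gcongr
        exact h _
    _ = 2 * D * (2 ^ β) ^ Q * (2 ^ β) ^ (Q * (k / Q)) := by
        rw [← pow_mul, mul_add_one, pow_add]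
        ring
    _ ≤ 2 * D * (2 ^ β) ^ Q * (2 ^ β) ^ k := by
        gcongr
        exact Nat.mul_div_le k Q

theorem HasFewCellsNearLines.ubDim_le {Q : ℕ} (hQ : 0 < Q) {α C : ℝ} {Λ : NNReal} {f : ℝ → ℝ}
    (hP : HasFewCellsNearLines (2 ^ Q) (((2 ^ Q : ℕ) : ℝ) ^ (-α)) Λ C f) (hα : 0 < α) (hC : 0 ≤ C)
    (hf : LipschitzWith Λ f) (hA : A ⊆ Icc 0 1) (hfA : ChordSlopesMono f A) : ubDim A ≤ α := by
  refine le_of_forall_gt_imp_ge_of_dense fun β hβ ↦ ?_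
  have hM : (1 : ℝ) < (2 ^ Q : ℕ) := Nat.one_lt_cast.2 (Nat.one_lt_two_pow hQ.ne')
  obtain ⟨D, hD⟩ := exists_le_mul_rpow_pow_of_recursion (N := fun n ↦ #(cells (2 ^ Q) n A))
    hM (hα.trans hβ) hβ (add_nonneg Λ.2 zero_le_one) hC fun l k ↦ by
      have hrec := hP.card_cells_add_le hfA hf (by positivity) (by positivity)
        (Real.rpow_le_one_of_one_le_of_nonpos hM.le (neg_nonpos.2 hα.le)) hC l k
      rwa [Real.rpow_neg (by positivity), inv_inv] at hrec
  exact ubDim_le_of_card_cells_le hQ (hα.trans hβ).le hA hD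

end BoxDimension

section Existence

theorem exists_scales {α : ℝ} (hα : 0 < α) (hα' : α < 1) :
    ∃ Q > 0, Scales (2 ^ Q) (((2 ^ Q : ℕ) : ℝ) ^ (-α)) := by
  have hM : Tendsto (fun Q : ℕ ↦ ((2 ^ Q : ℕ) : ℝ)) atTop atTop :=
    tendsto_natCast_atTop_atTop.comp (tendsto_pow_atTop_atTop_of_one_lt one_lt_two)
  have hratio := ((tendsto_rpow_atTop (sub_pos.2 hα')).comp hM).eventually_ge_atTop 2
  have hsmall := ((tendsto_rpow_atTop hα).comp hM).eventually_gt_atTop (4 * (8 * bumpBound + 12))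
  obtain ⟨Q, hQ, hratio, hsmall⟩ := ((eventually_gt_atTop 0).and (hratio.and hsmall)).exists
  have hpos : (0 : ℝ) < (2 ^ Q : ℕ) := by positivity
  refine ⟨Q, hQ, ⟨by positivity, ?_, ?_⟩⟩
  · rwa [← Real.rpow_add_one hpos.ne', neg_add_eq_sub]
  · rwa [Real.rpow_neg hpos.le, ← div_eq_mul_inv, div_lt_one (by positivity)]

theorem exists_lipschitz_hasFewCellsNearLines {α : ℝ} (hα : 0 < α) {M : ℕ}
    (h : Scales M ((M : ℝ) ^ (-α))) :
    ∃ f : ℝ → ℝ, ∃ Λ : NNReal, Differentiable ℝ f ∧ LipschitzWith Λ f ∧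
      (∃ C, ∀ x ∈ Icc (0 : ℝ) 1, ∀ y ∈ Icc (0 : ℝ) 1,
        |deriv f x - deriv f y| ≤ C * |x - y| ^ α) ∧
      ∃ C, 0 ≤ C ∧ HasFewCellsNearLines M ((M : ℝ) ^ (-α)) Λ C f := by
  obtain ⟨a, C, ha, hC, hP⟩ := exists_hasFewCellsNearLines_bumpSeries h
  have hf := scaleApprox_bumpSeries h ha
  have hΛ : ((2 * bumpBound).toNNReal : ℝ) = 2 * bumpBound :=
    Real.coe_toNNReal _ (by linarith [three_le_bumpBound])
  refine ⟨bumpSeries M _ a, (2 * bumpBound).toNNReal, hf.differentiable, ?_,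
    ⟨_, fun x hx y hy ↦ hf.abs_deriv_sub_deriv_le_rpow h hα rfl hx hy⟩, C, hC, by rwa [hΛ]⟩
  refine lipschitzWith_of_nnnorm_deriv_le hf.differentiable fun x ↦ ?_
  rw [← NNReal.coe_le_coe, hΛ]
  exact abs_deriv_bumpSeries_le h ha x

end Existence

end ConvexRestriction

/-- For each `0 < α < 1` there is a differentiable `f` with `α`-Hölder derivative such
that `f` is neither convex nor concave on any `A ⊆ [0,1]` of upper box dimension `> α`. -/
theorem stmt2 (α : ℝ) (hα : 0 < α ∧ α < 1) :
    ∃ f : ℝ → ℝ, Differentiable ℝ f ∧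
      (∃ C : ℝ, ∀ x ∈ Set.Icc (0 : ℝ) 1, ∀ y ∈ Set.Icc (0 : ℝ) 1,
        |deriv f x - deriv f y| ≤ C * |x - y| ^ α) ∧
      ∀ A ⊆ Set.Icc (0 : ℝ) 1, ubDim A > α →
        ¬ ConvexRestr f A ∧ ¬ ConcaveRestr f A := by
  obtain ⟨Q, hQ, hscales⟩ := ConvexRestriction.exists_scales hα.1 hα.2
  obtain ⟨f, Λ, hdiff, hlip, hholder, C, hC, hfew⟩ :=
    ConvexRestriction.exists_lipschitz_hasFewCellsNearLines hα.1 hscales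
  refine ⟨f, hdiff, hholder, fun A hA hdim ↦
    ⟨fun hconv ↦ hdim.not_ge ?_, fun hconc ↦ hdim.not_ge ?_⟩⟩
  · exact hfew.ubDim_le hQ hα.1 hC hlip hA (.of_convexRestr hconv)
  · exact hfew.neg.ubDim_le hQ hα.1 hC hlip.neg hA (.neg_of_concaveRestr hconc)
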